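/- arXiv:2202.00281 — 9 statements merged into one kernel-verified Lean document; each statement's English description precedes it below -/
import Mathlib

section
/- Let b : ℝ → ℝ be a smooth, nonnegative, integrable and square-integrable function. Then there exists a unique W^{2,2} solution ρ of the Kazdan–Warner equation ρ'' = 1 − e^{−ρ} − b on ℝ, and this unique solution satisfies ρ(s) ≥ 0 for every s ∈ ℝ. -/
open MeasureTheory Real

/-- `ρ` is a `W^{2,2}` solution of the Kazdan–Warner equation `ρ'' = 1 - e^{-ρ} - b`:
`ρ` is twice continuously differentiable, `ρ`, `ρ'`, `ρ''` are square-integrable on `ℝ`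
with respect to Lebesgue measure, and the ODE holds everywhere. -/
def IsW22SolutionKW (b ρ : ℝ → ℝ) : Prop :=
  ContDiff ℝ 2 ρ ∧
  MeasureTheory.Integrable (fun s => (ρ s) ^ 2) ∧
  MeasureTheory.Integrable (fun s => (deriv ρ s) ^ 2) ∧
  MeasureTheory.Integrable (fun s => (deriv (deriv ρ) s) ^ 2) ∧
  ∀ s : ℝ, deriv (deriv ρ) s = 1 - Real.exp (-ρ s) - b s

/-- Maximum principle on the line: a function bounded above with `z'' ≥ c z` wherever `z > 0`
is nonpositive. -/
theorem nonpos_of_mul_le_second_deriv {z z' z'' : ℝ → ℝ} {c C : ℝ} (hc : 0 < c)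
    (hz : ∀ s, HasDerivAt z (z' s) s) (hz' : ∀ s, HasDerivAt z' (z'' s) s)
    (hC : ∀ s, z s ≤ C) (h : ∀ s, 0 < z s → c * z s ≤ z'' s) (s : ℝ) : z s ≤ 0 := by
  by_contra! hs
  set K := 3 / c with hK
  have hK0 : 0 < K := by positivity
  obtain ⟨δ, hδ, hδs⟩ : ∃ δ > 0, δ * (s ^ 2 + K) < z s := by
    refine ⟨z s / (2 * (s ^ 2 + K)), by positivity, ?_⟩
    have : 0 < s ^ 2 + K := by positivity
    field_simp
    linarith
  have hv (t) : HasDerivAt (fun t => z t - δ * (t ^ 2 + K)) (z' t - δ * (2 * t)) t := by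
    have := ((hasDerivAt_pow 2 t).add_const K).const_mul δ
    simpa using (hz t).fun_sub this
  have hv' (t) : HasDerivAt (fun t => z' t - δ * (2 * t)) (z'' t - δ * 2) t := by
    have := ((hasDerivAt_id t).const_mul 2).const_mul δ
    simpa using (hz' t).fun_sub this
  have hcont : Continuous fun t => z t - δ * (t ^ 2 + K) :=
    continuous_iff_continuousAt.2 fun t => (hv t).continuousAt
  have hlim : Filter.Tendsto (fun t => z t - δ * (t ^ 2 + K)) (Filter.cocompact ℝ)
      Filter.atBot := by
    have hsq : Filter.Tendsto (fun t : ℝ => t ^ 2) (Filter.cocompact ℝ) Filter.atTop := by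
      have := (Filter.tendsto_pow_atTop (α := ℝ) two_ne_zero).comp
        (tendsto_norm_cocompact_atTop (E := ℝ))
      simpa [Function.comp_def] using this
    have hlin : Filter.Tendsto (fun t : ℝ => C + -(δ * (t ^ 2 + K))) (Filter.cocompact ℝ)
        Filter.atBot :=
      Filter.tendsto_atBot_add_const_left _ _ <| Filter.tendsto_neg_atTop_atBot.comp <|
        (Filter.tendsto_atTop_add_const_right _ K hsq).const_mul_atTop hδ
    exact Filter.tendsto_atBot_mono (fun t => by linarith [hC t]) hlin
  obtain ⟨x, hx⟩ := hcont.exists_forall_ge hlim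
  have hderiv : deriv (fun t => z t - δ * (t ^ 2 + K)) = fun t => z' t - δ * (2 * t) :=
    funext fun t => (hv t).deriv
  have hmax : IsLocalMax (fun t => z t - δ * (t ^ 2 + K)) x := Filter.Eventually.of_forall hx
  have hx0 : 0 < z x - δ * (x ^ 2 + K) := by linarith [hx s]
  have hpos : 0 < z'' x - δ * 2 := by
    have hx2 : 0 ≤ δ * x ^ 2 := by positivity
    have hδK : 0 < δ * K := by positivity
    have h1 := h x (by nlinarith)
    have h2 : c * (δ * K) = 3 * δ := by rw [hK]; field_simp
    have h3 : c * (δ * K) ≤ c * z x := by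
      refine mul_le_mul_of_nonneg_left ?_ hc.le
      nlinarith
    linarith
  have hmin : IsLocalMin (fun t => z t - δ * (t ^ 2 + K)) x := by
    apply isLocalMin_of_deriv_deriv_pos _ hmax.deriv_eq_zero (hv x).continuousAt
    rw [hderiv, (hv' x).deriv]
    exact hpos
  have hconst : (fun t => z t - δ * (t ^ 2 + K)) =ᶠ[nhds x] fun _ => z x - δ * (x ^ 2 + K) := by
    filter_upwards [hmax, hmin] with t h1 h2 using le_antisymm h1 h2
  have hzero := hconst.deriv.deriv_eq
  rw [hderiv, (hv' x).deriv] at hzero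
  simp at hzero
  linarith

/-- A nonnegative continuous function which differs from the derivative of a bounded function by an
integrable function is integrable. -/
theorem integrable_of_bounded_antideriv {F p q : ℝ → ℝ} {D : ℝ}
    (hF : ∀ s, HasDerivAt F (p s + q s) s) (hD : ∀ s, |F s| ≤ D) (hp : Continuous p)
    (hp0 : ∀ s, 0 ≤ p s) (hq : Continuous q) (hqi : Integrable q) : Integrable p := by
  refine integrable_of_intervalIntegral_norm_bounded (l := Filter.atTop) (a := fun i : ℝ => -i)
    (b := fun i => i) (2 * D + ∫ x, |q x|)
    (fun i => hp.integrableOn_Ioc) Filter.tendsto_neg_atTop_atBot Filter.tendsto_id ?_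
  filter_upwards [Filter.eventually_ge_atTop 0] with i hi
  have hFTC : ∫ x in (-i)..i, (p x + q x) = F i - F (-i) :=
    intervalIntegral.integral_eq_sub_of_hasDerivAt (fun x _ => hF x)
      ((hp.add hq).intervalIntegrable _ _)
  rw [intervalIntegral.integral_add (hp.intervalIntegrable _ _) (hq.intervalIntegrable _ _)]
    at hFTC
  have hnorm : ∫ x in (-i)..i, ‖p x‖ = ∫ x in (-i)..i, p x := by
    congr 1 with x
    simp [abs_of_nonneg (hp0 x)]
  have hqb : |∫ x in (-i)..i, q x| ≤ ∫ x, |q x| := by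
    refine (intervalIntegral.abs_integral_le_integral_abs (by linarith)).trans ?_
    rw [intervalIntegral.integral_of_le (by linarith)]
    exact setIntegral_le_integral hqi.abs (Filter.Eventually.of_forall fun x => abs_nonneg _)
  rw [hnorm]
  linarith [abs_le.1 (hD i), abs_le.1 (hD (-i)), abs_le.1 hqb]

/-- A bounded solution of `E' = -ε E + h`, where `h` is dominated by a constant plus an integrable
function. -/
theorem exists_bounded_deriv_eq_neg_mul_add {h k : ℝ → ℝ} {ε C : ℝ} (hε : 0 < ε)
    (hh : Continuous h) (hk : Integrable k) (hk0 : ∀ s, 0 ≤ k s) (hb : ∀ s, |h s| ≤ C + k s) :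
    ∃ E : ℝ → ℝ, (∀ s, HasDerivAt E (-ε * E s + h s) s) ∧ ∀ s, |E s| ≤ C / ε + ∫ x, k x := by
  have hcont : Continuous fun t => exp (ε * t) * h t := by fun_prop
  have hdom (s : ℝ) : IntegrableOn (fun t => C * exp (ε * t) + exp (ε * s) * k t) (Set.Iic s) :=
    ((integrableOn_exp_mul_Iic hε s).const_mul C).add (hk.const_mul _).integrableOn
  have hle (s : ℝ) : ∀ᵐ t ∂volume.restrict (Set.Iic s),
      ‖exp (ε * t) * h t‖ ≤ C * exp (ε * t) + exp (ε * s) * k t := by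
    filter_upwards [ae_restrict_mem measurableSet_Iic] with t ht
    rw [norm_mul, Real.norm_eq_abs, Real.norm_eq_abs, abs_of_pos (exp_pos _)]
    have h1 : exp (ε * t) * |h t| ≤ exp (ε * t) * (C + k t) := by gcongr; exact hb t
    have h2 : exp (ε * t) * k t ≤ exp (ε * s) * k t := by
      have := hk0 t
      have : t ≤ s := ht
      gcongr
    linarith
  have hintegrable (s : ℝ) : IntegrableOn (fun t => exp (ε * t) * h t) (Set.Iic s) :=
    (hdom s).mono' hcont.aestronglyMeasurable (hle s)
  refine ⟨fun s => exp (-(ε * s)) * ∫ t in Set.Iic s, exp (ε * t) * h t, fun s => ?_, fun s => ?_⟩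
  · have hI : HasDerivAt (fun s => ∫ t in Set.Iic s, exp (ε * t) * h t) (exp (ε * s) * h s) s := by
      have hsplit : (fun s => ∫ t in Set.Iic s, exp (ε * t) * h t) =
          fun s => (∫ t in (0 : ℝ)..s, exp (ε * t) * h t) +
            ∫ t in Set.Iic 0, exp (ε * t) * h t := by
        ext s
        rw [← intervalIntegral.integral_Iic_sub_Iic (hintegrable 0) (hintegrable s)]
        ring
      rw [hsplit]
      exact (hcont.integral_hasStrictDerivAt 0 s).hasDerivAt.add_const _
    have hexp : HasDerivAt (fun s => exp (-(ε * s))) (exp (-(ε * s)) * -(ε * 1)) s :=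
      ((hasDerivAt_id s).const_mul ε).neg.exp
    refine (hexp.mul hI).congr_deriv ?_
    have : exp (-(ε * s)) * (exp (ε * s) * h s) = h s := by
      rw [← mul_assoc, ← exp_add]; simp
    rw [this]
    ring
  · have h1 : |∫ t in Set.Iic s, exp (ε * t) * h t| ≤
        C * (exp (ε * s) / ε) + exp (ε * s) * ∫ x, k x := by
      refine (norm_integral_le_of_norm_le (hdom s) (hle s)).trans ?_
      rw [integral_add ((integrableOn_exp_mul_Iic hε s).const_mul C)
        (hk.const_mul _).integrableOn, integral_const_mul, integral_const_mul,
        integral_exp_mul_Iic hε]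
      have := setIntegral_le_integral (s := Set.Iic s) hk (Filter.Eventually.of_forall hk0)
      have := mul_le_mul_of_nonneg_left this (exp_pos (ε * s)).le
      linarith
    rw [abs_mul, abs_of_pos (exp_pos _)]
    calc _ ≤ exp (-(ε * s)) * (C * (exp (ε * s) / ε) + exp (ε * s) * ∫ x, k x) := by gcongr
      _ = (exp (-(ε * s)) * exp (ε * s)) * (C / ε + ∫ x, k x) := by ring
      _ = _ := by rw [← exp_add]; simp

/-- A bounded solution with bounded derivative of `v'' = ε² v - h`, where `h` is dominated by a
constant plus an integrable function. -/
theorem exists_bounded_second_deriv_eq_sq_mul_sub {h k : ℝ → ℝ} {ε C : ℝ} (hε : 0 < ε)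
    (hh : Continuous h) (hk : Integrable k) (hk0 : ∀ s, 0 ≤ k s)
    (hb : ∀ s, |h s| ≤ C + k s) :
    ∃ v v' : ℝ → ℝ, (∀ s, HasDerivAt v (v' s) s) ∧ (∀ s, HasDerivAt v' (ε ^ 2 * v s - h s) s) ∧
      (∀ s, |v s| ≤ (C / ε + ∫ x, k x) / ε) ∧ ∀ s, |v' s| ≤ C / ε + ∫ x, k x := by
  obtain ⟨E, hE, hEb⟩ := exists_bounded_deriv_eq_neg_mul_add hε hh hk hk0 hb
  obtain ⟨G, hG, hGb⟩ := exists_bounded_deriv_eq_neg_mul_add hε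
    (hh.comp continuous_neg) hk.comp_neg (fun s => hk0 (-s)) (fun s => hb (-s))
  rw [integral_neg_eq_self] at hGb
  have hG' (s) : HasDerivAt (fun s => G (-s)) (ε * G (-s) - h s) s := by
    have := (hG (-s)).scomp s (hasDerivAt_neg s)
    refine this.congr_deriv ?_
    simp
    ring
  refine ⟨fun s => (E s + G (-s)) / (2 * ε), fun s => (G (-s) - E s) / 2, fun s => ?_, fun s => ?_,
    fun s => ?_, fun s => ?_⟩
  · refine (((hE s).fun_add (hG' s)).div_const (2 * ε)).congr_deriv ?_
    field_simp
    ring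
  · refine (((hG' s).fun_sub (hE s)).div_const 2).congr_deriv ?_
    field_simp
    ring
  · rw [abs_div, abs_of_pos (by positivity : 0 < 2 * ε), div_le_div_iff₀ (by positivity) hε]
    have := (abs_add_le (E s) (G (-s))).trans (add_le_add (hEb s) (hGb (-s)))
    nlinarith
  · rw [abs_div, abs_two, div_le_iff₀ two_pos]
    have := (abs_sub (G (-s)) (E s)).trans (add_le_add (hGb (-s)) (hEb s))
    linarith

/-- The nonlinearity `x - 1 + e^{-x}`, with `x` truncated to `[0, M]`. -/
noncomputable def truncatedNonlinearity (M x : ℝ) : ℝ :=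
  max 0 (min x M) - 1 + exp (-max 0 (min x M))

theorem truncatedNonlinearity_of_mem {M x : ℝ} (h0 : 0 ≤ x) (hM : x ≤ M) :
    truncatedNonlinearity M x = x - 1 + exp (-x) := by
  simp [truncatedNonlinearity, h0, hM]

theorem continuous_truncatedNonlinearity (M : ℝ) : Continuous (truncatedNonlinearity M) := by
  unfold truncatedNonlinearity
  fun_prop

theorem truncatedNonlinearity_nonneg (M x : ℝ) : 0 ≤ truncatedNonlinearity M x := by
  unfold truncatedNonlinearity
  linarith [add_one_le_exp (-max 0 (min x M))]

theorem truncatedNonlinearity_le {M : ℝ} (hM : 0 ≤ M) (x : ℝ) : truncatedNonlinearity M x ≤ M := by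
  unfold truncatedNonlinearity
  have h1 : exp (-max 0 (min x M)) ≤ 1 := exp_le_one_iff.2 (by simp)
  have h2 : max 0 (min x M) ≤ M := by simp [hM]
  linarith

theorem exp_neg_mul_sub_le (x y : ℝ) : exp (-x) * (x - y) ≤ exp (-y) - exp (-x) := by
  have h : exp (-y) = exp (-x) * exp (x - y) := by rw [← exp_add]; ring_nf
  rw [h]
  nlinarith [add_one_le_exp (x - y), exp_pos (-x)]

theorem truncatedNonlinearity_sub_le {M x y : ℝ} (hM : 0 ≤ M) (hxy : y ≤ x) :
    truncatedNonlinearity M x - truncatedNonlinearity M y ≤ (1 - exp (-M)) * (x - y) := by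
  unfold truncatedNonlinearity
  set p := max 0 (min x M)
  set q := max 0 (min y M)
  have hpM : p ≤ M := by simp [p, hM]
  have hqp : q ≤ p := by simp only [p, q]; gcongr
  have hpq : p - q ≤ x - y := by
    simp only [p, q]
    grind
  have h1 := exp_neg_mul_sub_le p q
  have h2 : exp (-M) * (p - q) ≤ exp (-p) * (p - q) :=
    mul_le_mul_of_nonneg_right (exp_le_exp.2 (by linarith)) (by linarith)
  have h3 : (1 - exp (-M)) * (p - q) ≤ (1 - exp (-M)) * (x - y) :=
    mul_le_mul_of_nonneg_left hpq (by linarith [exp_le_one_iff.2 (neg_nonpos.2 hM)])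
  linarith

theorem abs_truncatedNonlinearity_sub_le {M : ℝ} (hM : 0 ≤ M) (x y : ℝ) :
    |truncatedNonlinearity M x - truncatedNonlinearity M y| ≤ (1 - exp (-M)) * |x - y| := by
  have mono {x y : ℝ} (hxy : y ≤ x) : truncatedNonlinearity M y ≤ truncatedNonlinearity M x := by
    unfold truncatedNonlinearity
    set p := max 0 (min x M)
    set q := max 0 (min y M)
    have hq0 : 0 ≤ q := by simp [q]
    have hqp : q ≤ p := by simp only [p, q]; gcongr
    have h1 := exp_neg_mul_sub_le q p
    have h2 : exp (-q) * (p - q) ≤ 1 * (p - q) :=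
      mul_le_mul_of_nonneg_right (exp_le_one_iff.2 (by linarith)) (by linarith)
    linarith
  rcases le_total y x with h | h
  · rw [abs_of_nonneg (sub_nonneg.2 (mono h)), abs_of_nonneg (sub_nonneg.2 h)]
    exact truncatedNonlinearity_sub_le hM h
  · rw [abs_sub_comm, abs_sub_comm x, abs_of_nonneg (sub_nonneg.2 (mono h)),
      abs_of_nonneg (sub_nonneg.2 h)]
    exact truncatedNonlinearity_sub_le hM h

/-- The truncated equation has a bounded solution with bounded derivative, by the contraction
principle in the space of bounded continuous functions. -/
theorem exists_bounded_solution_truncated {b : ℝ → ℝ} {M : ℝ} (hM : 0 ≤ M) (hb : Continuous b)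
    (hb0 : ∀ s, 0 ≤ b s) (hbi : Integrable b) :
    ∃ u u' : ℝ → ℝ, ∃ D : ℝ, (∀ s, HasDerivAt u (u' s) s) ∧
      (∀ s, HasDerivAt u' (u s - truncatedNonlinearity M (u s) - b s) s) ∧
      (∀ s, |u s| ≤ D) ∧ ∀ s, |u' s| ≤ D := by
  have hsolve (u : BoundedContinuousFunction ℝ ℝ) :
      ∃ v v' : ℝ → ℝ, (∀ s, HasDerivAt v (v' s) s) ∧
        (∀ s, HasDerivAt v' (v s - (truncatedNonlinearity M (u s) + b s)) s) ∧
        (∀ s, |v s| ≤ M + ∫ x, b x) ∧ ∀ s, |v' s| ≤ M + ∫ x, b x := by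
    simpa using exists_bounded_second_deriv_eq_sq_mul_sub (h := fun s =>
      truncatedNonlinearity M (u s) + b s) one_pos
      (((continuous_truncatedNonlinearity M).comp u.continuous).add hb) hbi hb0
      (fun s => by
        rw [abs_of_nonneg (add_nonneg (truncatedNonlinearity_nonneg _ _) (hb0 s))]
        linarith [truncatedNonlinearity_le hM (u s)])
  choose V V' hV hV' hVb hVb' using hsolve
  let T (u : BoundedContinuousFunction ℝ ℝ) : BoundedContinuousFunction ℝ ℝ :=
    BoundedContinuousFunction.ofNormedAddCommGroup (V u)
      (continuous_iff_continuousAt.2 fun s => (hV u s).continuousAt) (M + ∫ x, b x) (hVb u)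
  have hle (u₁ u₂ : BoundedContinuousFunction ℝ ℝ) (s : ℝ) :
      V u₁ s - V u₂ s ≤ (1 - exp (-M)) * dist u₁ u₂ := by
    have key := nonpos_of_mul_le_second_deriv
      (z := fun s => V u₁ s - V u₂ s - (1 - exp (-M)) * dist u₁ u₂)
      (C := 2 * (M + ∫ x, b x) + |(1 - exp (-M)) * dist u₁ u₂|) one_pos
      (fun s => ((hV u₁ s).fun_sub (hV u₂ s)).sub_const _)
      (fun s => (hV' u₁ s).fun_sub (hV' u₂ s))
      (fun s => by
        linarith [abs_le.1 (hVb u₁ s), abs_le.1 (hVb u₂ s),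
          neg_abs_le ((1 - exp (-M)) * dist u₁ u₂)])
      (fun s _ => by
        have h1 := abs_truncatedNonlinearity_sub_le hM (u₁ s) (u₂ s)
        have h2 : (1 - exp (-M)) * |u₁ s - u₂ s| ≤ (1 - exp (-M)) * dist u₁ u₂ :=
          mul_le_mul_of_nonneg_left
            (by
              rw [← Real.dist_eq]
              exact BoundedContinuousFunction.dist_coe_le_dist s)
            (by linarith [exp_le_one_iff.2 (neg_nonpos.2 hM)])
        linarith [(abs_le.1 (h1.trans h2)).2]) s
    linarith
  have hK : 0 ≤ 1 - exp (-M) := by linarith [exp_le_one_iff.2 (neg_nonpos.2 hM)]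
  obtain ⟨K, hKM⟩ : ∃ K : NNReal, (K : ℝ) = 1 - exp (-M) := ⟨_, Real.coe_toNNReal _ hK⟩
  have hT : ContractingWith K T := by
    refine ⟨?_, LipschitzWith.of_dist_le_mul fun u₁ u₂ => ?_⟩
    · rw [← NNReal.coe_lt_coe]
      simp [hKM, exp_pos]
    · rw [hKM]
      refine (BoundedContinuousFunction.dist_le (mul_nonneg hK dist_nonneg)).2 fun s => ?_
      rw [Real.dist_eq, abs_le]
      have h1 := hle u₁ u₂ s
      have h2 := hle u₂ u₁ s
      rw [dist_comm] at h2
      simp only [T, BoundedContinuousFunction.coe_ofNormedAddCommGroup]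
      exact ⟨by linarith, h1⟩
  obtain ⟨f, hf⟩ : ∃ f, T f = f := ⟨_, hT.fixedPoint_isFixedPt⟩
  have hfix (s) : V f s = f s := DFunLike.congr_fun hf s
  refine ⟨V f, V' f, M + ∫ x, b x, hV f, fun s => ?_, hVb f, hVb' f⟩
  refine (hV' f s).congr_deriv ?_
  rw [hfix]
  ring

/-- A bounded integrable supersolution, together with its bound. -/
theorem exists_integrable_supersolution {b : ℝ → ℝ} (hb : Continuous b) (hb0 : ∀ s, 0 ≤ b s)
    (hbi : Integrable b) :
    ∃ w w' w'' : ℝ → ℝ, ∃ M : ℝ, (∀ s, HasDerivAt w (w' s) s) ∧ (∀ s, HasDerivAt w' (w'' s) s) ∧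
      (∀ s, 0 ≤ w s) ∧ (∀ s, w s ≤ M) ∧ Integrable w ∧
      ∀ s, w'' s ≤ 1 - exp (-w s) - b s := by
  set B := ∫ x, b x
  have hB : 0 ≤ B := integral_nonneg hb0
  set ε := 1 / (1 + B) with hεdef
  have hε : 0 < ε := by positivity
  obtain ⟨w, w', hw, hw', hwb, hwb'⟩ := exists_bounded_second_deriv_eq_sq_mul_sub (C := 0) hε hb hbi
    hb0 (fun s => by rw [abs_of_nonneg (hb0 s), zero_add])
  simp only [zero_div, zero_add] at hwb hwb'
  have hw0 (s) : 0 ≤ w s := by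
    have := nonpos_of_mul_le_second_deriv (C := B / ε) (pow_pos hε 2) (fun s => (hw s).fun_neg)
      (fun s => (hw' s).fun_neg) (fun s => by linarith [abs_le.1 (hwb s)])
      (fun s _ => by linarith [hb0 s]) s
    linarith
  have hwcont : Continuous w := continuous_iff_continuousAt.2 fun s => (hw s).continuousAt
  have hwint : Integrable fun s => ε ^ 2 * w s :=
    integrable_of_bounded_antideriv (q := fun s => -b s)
      (fun s => (hw' s).congr_deriv (sub_eq_add_neg _ _)) hwb' (by fun_prop)
      (fun s => by have := hw0 s; positivity) (by fun_prop) hbi.neg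
  refine ⟨w, w', _, B / ε, hw, hw', hw0, fun s => (le_abs_self _).trans (hwb s), ?_, fun s => ?_⟩
  · refine (hwint.const_mul (ε ^ 2)⁻¹).congr (Filter.Eventually.of_forall fun s => ?_)
    field_simp
  · have hws := (le_abs_self _).trans (hwb s)
    have hεB : ε * (1 + B) = 1 := by rw [hεdef]; field_simp
    have h1 : ε * w s ≤ B := by rw [le_div_iff₀ hε] at hws; linarith
    have h2 : ε ^ 2 * (1 + w s) ≤ 1 := by nlinarith
    have h3 : exp (-w s) * (1 + w s) ≤ 1 := by
      have h4 : exp (-w s) * exp (w s) = 1 := by rw [← exp_add]; simp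
      nlinarith [add_one_le_exp (w s), exp_pos (-w s)]
    have h5 : ε ^ 2 * w s * (1 + w s) ≤ (1 - exp (-w s)) * (1 + w s) := by
      nlinarith [hw0 s, mul_le_mul_of_nonneg_left h2 (hw0 s)]
    have := le_of_mul_le_mul_right h5 (by linarith [hw0 s])
    linarith

/-- The product of two continuous square-integrable functions is integrable. -/
theorem integrable_mul_of_integrable_sq {f g : ℝ → ℝ} (hf : Continuous f) (hg : Continuous g)
    (hf2 : Integrable fun s => f s ^ 2) (hg2 : Integrable fun s => g s ^ 2) :
    Integrable fun s => f s * g s := by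
  refine (hf2.add hg2).mono' (by fun_prop) (Filter.Eventually.of_forall fun s => ?_)
  rw [Real.norm_eq_abs, abs_le]
  simp only [Pi.add_apply]
  constructor <;> nlinarith [sq_nonneg (f s + g s), sq_nonneg (f s - g s)]

namespace IsW22SolutionKW

variable {b ρ : ℝ → ℝ}

theorem hasDerivAt (h : IsW22SolutionKW b ρ) (s : ℝ) : HasDerivAt ρ (deriv ρ s) s :=
  (h.1.differentiable two_ne_zero s).hasDerivAt

theorem contDiff_deriv (h : IsW22SolutionKW b ρ) : ContDiff ℝ 1 (deriv ρ) :=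
  (contDiff_succ_iff_deriv.1 (show ContDiff ℝ (1 + 1) ρ by
    rw [one_add_one_eq_two]; exact h.1)).2.2

theorem hasDerivAt_deriv (h : IsW22SolutionKW b ρ) (s : ℝ) :
    HasDerivAt (deriv ρ) (1 - exp (-ρ s) - b s) s := by
  rw [← h.2.2.2.2 s]
  exact (h.contDiff_deriv.differentiable one_ne_zero s).hasDerivAt

theorem exists_abs_le (h : IsW22SolutionKW b ρ) : ∃ C, ∀ s, |ρ s| ≤ C := by
  have hc := h.1.continuous
  have hc' := h.contDiff_deriv.continuous
  have hi := (integrable_mul_of_integrable_sq hc hc' h.2.1 h.2.2.1).const_mul 2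
  set D := ρ 0 ^ 2 + ∫ s, |2 * (ρ s * deriv ρ s)|
  refine ⟨1 + D, fun s => ?_⟩
  have hFTC : ∫ t in (0 : ℝ)..s, 2 * (ρ t * deriv ρ t) = ρ s ^ 2 - ρ 0 ^ 2 :=
    intervalIntegral.integral_eq_sub_of_hasDerivAt
      (fun t _ => ((h.hasDerivAt t).fun_pow 2).congr_deriv (by simp; ring))
      (Continuous.intervalIntegrable (by fun_prop) _ _)
  have hle : |∫ t in (0 : ℝ)..s, 2 * (ρ t * deriv ρ t)| ≤ ∫ s, |2 * (ρ s * deriv ρ s)| :=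
    (intervalIntegral.norm_integral_le_integral_norm_uIoc (μ := volume)
      (f := fun t => 2 * (ρ t * deriv ρ t))).trans
      (setIntegral_le_integral hi.abs (Filter.Eventually.of_forall fun x => abs_nonneg _))
  have hsq : ρ s ^ 2 ≤ D := by linarith [abs_le.1 hle]
  nlinarith [sq_abs (ρ s), sq_nonneg (|ρ s| - 1), abs_nonneg (ρ s)]

theorem nonneg (h : IsW22SolutionKW b ρ) (hb : ∀ s, 0 ≤ b s) (s : ℝ) : 0 ≤ ρ s := by
  obtain ⟨C, hC⟩ := h.exists_abs_le
  have := nonpos_of_mul_le_second_deriv (C := C) one_pos (fun s => (h.hasDerivAt s).fun_neg)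
    (fun s => (h.hasDerivAt_deriv s).fun_neg) (fun s => by linarith [abs_le.1 (hC s)])
    (fun s _ => by linarith [hb s, add_one_le_exp (-ρ s)]) s
  linarith

theorem le {σ : ℝ → ℝ} (hρ : IsW22SolutionKW b ρ) (hσ : IsW22SolutionKW b σ) (s : ℝ) :
    ρ s ≤ σ s := by
  obtain ⟨C, hC⟩ := hρ.exists_abs_le
  obtain ⟨D, hD⟩ := hσ.exists_abs_le
  have := nonpos_of_mul_le_second_deriv (C := C + D) (exp_pos (-C))
    (fun s => (hρ.hasDerivAt s).fun_sub (hσ.hasDerivAt s))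
    (fun s => (hρ.hasDerivAt_deriv s).fun_sub (hσ.hasDerivAt_deriv s))
    (fun s => by linarith [abs_le.1 (hC s), abs_le.1 (hD s)])
    (fun s hs => by
      have h1 := exp_neg_mul_sub_le (ρ s) (σ s)
      have h2 : exp (-C) * (ρ s - σ s) ≤ exp (-ρ s) * (ρ s - σ s) :=
        mul_le_mul_of_nonneg_right (exp_le_exp.2 (by linarith [abs_le.1 (hC s)])) hs.le
      linarith) s
  linarith

end IsW22SolutionKW

theorem exists_isW22SolutionKW {b : ℝ → ℝ} (hb : Continuous b) (hb0 : ∀ s, 0 ≤ b s)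
    (hbi : Integrable b) (hb2 : Integrable fun s => b s ^ 2) : ∃ ρ, IsW22SolutionKW b ρ := by
  obtain ⟨w, w', w'', M, hw, hw', hw0, hwM, hwi, hsuper⟩ :=
    exists_integrable_supersolution hb hb0 hbi
  have hM : 0 ≤ M := (hw0 0).trans (hwM 0)
  obtain ⟨u, u', D, hu, hu', huD, huD'⟩ := exists_bounded_solution_truncated hM hb hb0 hbi
  have hu0 (s) : 0 ≤ u s := by
    have := nonpos_of_mul_le_second_deriv (C := D) one_pos (fun s => (hu s).fun_neg)
      (fun s => (hu' s).fun_neg) (fun s => by linarith [abs_le.1 (huD s)])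
      (fun s _ => by linarith [hb0 s, truncatedNonlinearity_nonneg M (u s)]) s
    linarith
  have huw (s) : u s ≤ w s := by
    have := nonpos_of_mul_le_second_deriv (C := D) (exp_pos (-M))
      (fun s => (hu s).fun_sub (hw s)) (fun s => (hu' s).fun_sub (hw' s))
      (fun s => by linarith [abs_le.1 (huD s), hw0 s])
      (fun s hs => by
        have h1 := truncatedNonlinearity_sub_le hM (sub_pos.1 hs).le
        rw [truncatedNonlinearity_of_mem (hw0 s) (hwM s)] at h1
        linarith [hsuper s]) s
    linarith
  have hu'' (s) : HasDerivAt u' (1 - exp (-u s) - b s) s := by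
    refine (hu' s).congr_deriv ?_
    rw [truncatedNonlinearity_of_mem (hu0 s) ((huw s).trans (hwM s))]
    ring
  have hderiv : deriv u = u' := funext fun s => (hu s).deriv
  have hderiv' : deriv u' = fun s => 1 - exp (-u s) - b s := funext fun s => (hu'' s).deriv
  have hc : Continuous u := continuous_iff_continuousAt.2 fun s => (hu s).continuousAt
  have hc' : Continuous u' := continuous_iff_continuousAt.2 fun s => (hu'' s).continuousAt
  have hc'' : Continuous fun s => 1 - exp (-u s) - b s := by fun_prop
  have hi2 : Integrable fun s => u s ^ 2 := by
    refine (hwi.const_mul M).mono' (by fun_prop) (Filter.Eventually.of_forall fun s => ?_)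
    rw [Real.norm_eq_abs, abs_of_nonneg (sq_nonneg _), sq]
    exact mul_le_mul ((huw s).trans (hwM s)) (huw s) (hu0 s) hM
  have hi2'' : Integrable fun s => (1 - exp (-u s) - b s) ^ 2 := by
    refine (hi2.add hb2).mono' (by fun_prop) (Filter.Eventually.of_forall fun s => ?_)
    rw [Real.norm_eq_abs, abs_of_nonneg (sq_nonneg _), Pi.add_apply]
    have h1 : 0 ≤ 1 - exp (-u s) := sub_nonneg.2 (exp_le_one_iff.2 (by linarith [hu0 s]))
    have h2 : 1 - exp (-u s) ≤ u s := by linarith [add_one_le_exp (-u s)]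
    nlinarith [mul_nonneg h1 (hb0 s)]
  have hi2' : Integrable fun s => u' s ^ 2 := by
    refine integrable_of_bounded_antideriv (F := fun s => u s * u' s) (D := D * D)
      (q := fun s => u s * (1 - exp (-u s) - b s))
      (fun s => ((hu s).fun_mul (hu'' s)).congr_deriv (by ring)) (fun s => ?_) (by fun_prop)
      (fun s => sq_nonneg _) (by fun_prop) (integrable_mul_of_integrable_sq hc hc'' hi2 hi2'')
    rw [abs_mul]
    exact mul_le_mul (huD s) (huD' s) (abs_nonneg _) ((abs_nonneg _).trans (huD s))
  refine ⟨u, ?_, hi2, by rwa [hderiv], by rwa [hderiv, hderiv'], fun s => by rw [hderiv, hderiv']⟩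
  rw [← one_add_one_eq_two, contDiff_succ_iff_deriv, hderiv, contDiff_one_iff_deriv, hderiv']
  exact ⟨fun s => (hu s).differentiableAt, by simp, fun s => (hu'' s).differentiableAt, hc''⟩

/-- Existence and uniqueness for the Kazdan–Warner equation, together with
nonnegativity of the unique solution. -/
theorem kazdan_warner_exists_unique_nonneg
    (b : ℝ → ℝ) (hb_smooth : ContDiff ℝ (⊤ : ℕ∞) b) (hb_nonneg : ∀ s, 0 ≤ b s)
    (hb_L1 : Integrable b) (hb_L2 : Integrable fun s => (b s) ^ 2) :
    (∃! ρ : ℝ → ℝ, IsW22SolutionKW b ρ) ∧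
    (∀ ρ : ℝ → ℝ, IsW22SolutionKW b ρ → ∀ s : ℝ, 0 ≤ ρ s) := by
  obtain ⟨ρ, hρ⟩ := exists_isW22SolutionKW hb_smooth.continuous hb_nonneg hb_L1 hb_L2
  exact ⟨⟨ρ, hρ, fun σ hσ => funext fun s => le_antisymm (hσ.le hρ s) (hρ.le hσ s)⟩,
    fun σ hσ => hσ.nonneg hb_nonneg⟩
end

section
/- Let b : ℝ → ℝ be a smooth, nonnegative, integrable function and let ρ be a W^{2,2} solution of the Kazdan–Warner equation ρ'' = 1 − e^{−ρ} − b. Then ∫_{−∞}^{∞} e^{−ρ(s)}·(b(s) + (ρ'(s))²) ds + ∫_{−∞}^{∞} (1 − e^{−ρ(s)})² ds = ‖b‖_{L¹}. -/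
open MeasureTheory Real

/-- A differentiable function is bounded if it and its derivative are square-integrable. -/
lemma exists_abs_le_of_sq_integrable {f f' : ℝ → ℝ} (hderiv : ∀ s, HasDerivAt f (f' s) s)
    (hf' : Continuous f') (hf_sq : Integrable fun s => f s ^ 2)
    (hf'_sq : Integrable fun s => f' s ^ 2) : ∃ M, ∀ s, |f s| ≤ M := by
  have hf : Continuous f := continuous_iff_continuousAt.2 fun s => (hderiv s).continuousAt
  have hint : Integrable fun s => 2 * f s * f' s := by
    refine (hf_sq.add hf'_sq).mono' (by fun_prop) (.of_forall fun s => ?_)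
    rw [Real.norm_eq_abs, abs_le]
    simp only [Pi.add_apply]
    constructor <;> nlinarith [sq_nonneg (f s + f' s), sq_nonneg (f s - f' s)]
  refine ⟨√(f 0 ^ 2 + ∫ s, ‖2 * f s * f' s‖), fun x => Real.abs_le_sqrt ?_⟩
  have hftc : ∫ s in (0 : ℝ)..x, 2 * f s * f' s = f x ^ 2 - f 0 ^ 2 :=
    intervalIntegral.integral_eq_sub_of_hasDerivAt
      (fun s _ => by simpa using (hderiv s).pow 2) hint.intervalIntegrable
  have hle : ‖∫ s in (0 : ℝ)..x, 2 * f s * f' s‖ ≤ ∫ s, ‖2 * f s * f' s‖ :=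
    intervalIntegral.norm_integral_le_integral_norm_uIoc.trans
      (setIntegral_le_integral hint.norm (.of_forall fun s => norm_nonneg _))
  rw [hftc, Real.norm_eq_abs] at hle
  linarith [le_abs_self (f x ^ 2 - f 0 ^ 2)]

/-- The function `r ↦ 1 - e^{-r}` grows at most linearly on bounded sets. -/
lemma abs_one_sub_exp_neg_le {r M : ℝ} (h : |r| ≤ M) :
    |1 - Real.exp (-r)| ≤ Real.exp M * |r| := by
  have hM : 1 ≤ Real.exp M := Real.one_le_exp ((abs_nonneg r).trans h)
  have hlin : 1 - Real.exp (-r) ≤ r := by linarith [Real.add_one_le_exp (-r)]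
  rcases le_total 0 r with hr | hr
  · have hexp : Real.exp (-r) ≤ 1 := Real.exp_le_one_iff.2 (by linarith)
    rw [abs_of_nonneg (by linarith), abs_of_nonneg hr]
    nlinarith
  · rw [abs_of_nonpos hr] at h ⊢
    have hexp : Real.exp (-r) ≤ Real.exp M := Real.exp_le_exp.2 h
    have hmul : Real.exp (-r) * Real.exp r = 1 := by rw [← Real.exp_add]; simp
    rw [abs_of_nonpos (by linarith)]
    nlinarith [Real.add_one_le_exp r, Real.exp_pos (-r)]

/-- The energy identity for `W^{2,2}` solutions of the Kazdan–Warner equation: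
`∫ e^{-ρ}(b + (ρ')²) + ∫ (1 - e^{-ρ})² = ‖b‖_{L¹}`. -/
theorem kazdan_warner_energy_identity
    (b : ℝ → ℝ) (hb_smooth : ContDiff ℝ (⊤ : ℕ∞) b) (hb_nonneg : ∀ s, 0 ≤ b s)
    (hb_L1 : Integrable b)
    (ρ : ℝ → ℝ) (hρ : IsW22SolutionKW b ρ) :
    (∫ s : ℝ, Real.exp (-ρ s) * (b s + (deriv ρ s) ^ 2)) +
      (∫ s : ℝ, (1 - Real.exp (-ρ s)) ^ 2) = ∫ s : ℝ, |b s| := by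
  obtain ⟨hC2, hρ_sq, hρ'_sq, -, hode⟩ := hρ
  have hb_cont : Continuous b := hb_smooth.continuous
  have hρ_cont : Continuous ρ := hC2.continuous
  have hC1' : ContDiff ℝ 1 (deriv ρ) := hC2.deriv'
  have hρ'_cont : Continuous (deriv ρ) := hC1'.continuous
  have hρ_deriv (s : ℝ) : HasDerivAt ρ (deriv ρ s) s :=
    (hC2.differentiable (by norm_num) s).hasDerivAt
  have hρ'_deriv (s : ℝ) : HasDerivAt (deriv ρ) (1 - Real.exp (-ρ s) - b s) s :=
    hode s ▸ (hC1'.differentiable (by norm_num) s).hasDerivAt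
  obtain ⟨M, hM⟩ := exists_abs_le_of_sq_integrable hρ_deriv hρ'_cont hρ_sq hρ'_sq
  have hexp_le (s : ℝ) : ‖Real.exp (-ρ s)‖ ≤ Real.exp M := by
    rw [Real.norm_eq_abs, Real.abs_exp, Real.exp_le_exp]
    linarith [neg_abs_le (ρ s), hM s]
  have hu_sq : Integrable fun s => (1 - Real.exp (-ρ s)) ^ 2 := by
    refine (hρ_sq.const_mul (Real.exp M ^ 2)).mono' (by fun_prop) (.of_forall fun s => ?_)
    rw [Real.norm_eq_abs, abs_pow, ← sq_abs (ρ s), ← mul_pow]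
    gcongr
    exact abs_one_sub_exp_neg_le (hM s)
  have hweighted : Integrable fun s => Real.exp (-ρ s) * (b s + deriv ρ s ^ 2) :=
    (hb_L1.add hρ'_sq).bdd_mul (by fun_prop) (.of_forall hexp_le)
  have hflux : Integrable fun s => (1 - Real.exp (-ρ s)) * deriv ρ s := by
    refine (hu_sq.add hρ'_sq).mono' (by fun_prop) (.of_forall fun s => ?_)
    rw [Real.norm_eq_abs, abs_le]
    simp only [Pi.add_apply]
    constructor <;> nlinarith [sq_nonneg (1 - Real.exp (-ρ s) + deriv ρ s),
      sq_nonneg (1 - Real.exp (-ρ s) - deriv ρ s)]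
  have hflux_deriv (s : ℝ) : HasDerivAt (fun s => (1 - Real.exp (-ρ s)) * deriv ρ s)
      (Real.exp (-ρ s) * (b s + deriv ρ s ^ 2) + (1 - Real.exp (-ρ s)) ^ 2 - b s) s := by
    refine (((hρ_deriv s).fun_neg.exp.const_sub 1).fun_mul (hρ'_deriv s)).congr_deriv ?_
    ring
  have hsum : Integrable fun s =>
      Real.exp (-ρ s) * (b s + deriv ρ s ^ 2) + (1 - Real.exp (-ρ s)) ^ 2 := hweighted.add hu_sq
  have hzero := integral_eq_zero_of_hasDerivAt_of_integrable hflux_deriv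
    (hsum.sub hb_L1) hflux
  rw [integral_sub hsum hb_L1, integral_add hweighted hu_sq] at hzero
  simp only [abs_of_nonneg (hb_nonneg _)]
  linarith
end

section
/- Let b : ℝ → ℝ be a smooth, nonnegative, integrable and square-integrable function and let ρ be a W^{2,2} solution of the Kazdan–Warner equation ρ'' = 1 − e^{−ρ} − b. Then ‖ρ''‖_{L²} ≤ √(‖b‖_{L¹}) + ‖b‖_{L²}. -/
open MeasureTheory Real

/-- A differentiable function with `f f'` integrable on the line is bounded. -/
lemma exists_forall_sq_le_of_integrable_mul_deriv {f f' : ℝ → ℝ}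
    (hf : ∀ s, HasDerivAt f (f' s) s) (hi : Integrable fun s => f s * f' s) :
    ∃ C, ∀ s, f s ^ 2 ≤ C := by
  have hi2 : Integrable fun s => 2 * (f s * f' s) := hi.const_mul 2
  refine ⟨f 0 ^ 2 + ∫ s, ‖2 * (f s * f' s)‖, fun x => ?_⟩
  have hftc : ∫ s in (0 : ℝ)..x, 2 * (f s * f' s) = f x ^ 2 - f 0 ^ 2 := by
    refine intervalIntegral.integral_eq_sub_of_hasDerivAt (f := fun s => f s ^ 2)
      (fun s _ => ?_) hi2.intervalIntegrable
    exact ((hf s).pow 2).congr_deriv (by push_cast; ring)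
  have hle : ‖∫ s in (0 : ℝ)..x, 2 * (f s * f' s)‖ ≤ ∫ s, ‖2 * (f s * f' s)‖ :=
    intervalIntegral.norm_integral_le_integral_norm_uIoc.trans
      (setIntegral_le_integral hi2.norm (.of_forall fun _ => norm_nonneg _))
  have := (Real.le_norm_self _).trans hle
  linarith

/-- For `f` in `W^{2,2}` with `1 - e^{-f}` in `L²`, integration by parts gives
`∫ (1 - e^{-f}) f'' = -∫ e^{-f} (f')² ≤ 0`. -/
lemma integral_one_sub_exp_neg_mul_deriv2_nonpos {f f' f'' : ℝ → ℝ}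
    (hf : ∀ s, HasDerivAt f (f' s) s) (hf' : ∀ s, HasDerivAt f' (f'' s) s)
    (h0 : MemLp f 2) (h1 : MemLp f' 2) (h2 : MemLp f'' 2)
    (hu : MemLp (fun s => 1 - exp (-f s)) 2) :
    ∫ s, (1 - exp (-f s)) * f'' s ≤ 0 := by
  obtain ⟨C, hC⟩ := exists_forall_sq_le_of_integrable_mul_deriv hf (h0.integrable_mul h1)
  have hfc : Continuous f := continuous_iff_continuousAt.2 fun s => (hf s).continuousAt
  have hE : Integrable fun s => exp (-f s) * f' s ^ 2 := by
    refine h1.integrable_sq.bdd_mul (c := exp (C + 1))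
      (by fun_prop) (.of_forall fun s => ?_)
    rw [Real.norm_eq_abs, abs_exp, exp_le_exp]
    nlinarith [hC s, sq_nonneg (f s + 1 / 2)]
  have hu2 : Integrable fun s => (1 - exp (-f s)) * f'' s := hu.integrable_mul h2
  have hzero := integral_eq_zero_of_hasDerivAt_of_integrable
    (f := fun s => (1 - exp (-f s)) * f' s)
    (f' := fun s => exp (-f s) * f' s ^ 2 + (1 - exp (-f s)) * f'' s)
    (fun s => (((hf s).fun_neg.exp.const_sub 1).fun_mul (hf' s)).congr_deriv (by ring))
    (hE.add hu2) (hu.integrable_mul h1)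
  rw [integral_add hE hu2] at hzero
  have : 0 ≤ ∫ s, exp (-f s) * f' s ^ 2 := integral_nonneg fun s => by positivity
  linarith

/-- For a `W^{2,2}` solution of the Kazdan–Warner equation one has the bound
`‖ρ''‖_{L²} ≤ √(‖b‖_{L¹}) + ‖b‖_{L²}`. -/
theorem kazdan_warner_second_derivative_L2_bound
    (b : ℝ → ℝ) (hb_smooth : ContDiff ℝ (⊤ : ℕ∞) b) (hb_nonneg : ∀ s, 0 ≤ b s)
    (hb_L1 : Integrable b) (hb_L2 : Integrable fun s => (b s) ^ 2)
    (ρ : ℝ → ℝ) (hρ : IsW22SolutionKW b ρ) :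
    Real.sqrt (∫ s : ℝ, (deriv (deriv ρ) s) ^ 2) ≤
      Real.sqrt (∫ s : ℝ, |b s|) + Real.sqrt (∫ s : ℝ, (b s) ^ 2) := by
  obtain ⟨hC2, h0, h1, h2, hode⟩ := hρ
  have hC1 : ContDiff ℝ 1 (deriv ρ) := hC2.deriv' (n := 1)
  have hcont2 : Continuous (deriv (deriv ρ)) := hC1.continuous_deriv le_rfl
  have m0 : MemLp ρ 2 := (memLp_two_iff_integrable_sq hC2.continuous.aestronglyMeasurable).2 h0
  have m1 : MemLp (deriv ρ) 2 :=
    (memLp_two_iff_integrable_sq hC1.continuous.aestronglyMeasurable).2 h1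
  have m2 : MemLp (deriv (deriv ρ)) 2 :=
    (memLp_two_iff_integrable_sq hcont2.aestronglyMeasurable).2 h2
  have mb : MemLp b 2 :=
    (memLp_two_iff_integrable_sq hb_smooth.continuous.aestronglyMeasurable).2 hb_L2
  have mu : MemLp (fun s => 1 - exp (-ρ s)) 2 := by
    convert m2.add mb using 1
    funext s
    simp [hode s]
  have hneg := integral_one_sub_exp_neg_mul_deriv2_nonpos
    (fun s => (hC2.differentiable (by norm_num) s).hasDerivAt)
    (fun s => (hC1.differentiable (by norm_num) s).hasDerivAt) m0 m1 m2 mu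
  have hprod : Integrable fun s => (1 - exp (-ρ s)) * deriv (deriv ρ) s := mu.integrable_mul m2
  -- Pointwise `(ρ'')² ≤ b² + 2 (1 - e^{-ρ}) ρ''`, so in fact `‖ρ''‖_{L²} ≤ ‖b‖_{L²}`.
  have hle : ∫ s, deriv (deriv ρ) s ^ 2 ≤ ∫ s, b s ^ 2 := by
    have hmono : ∫ s, deriv (deriv ρ) s ^ 2
        ≤ ∫ s, (b s ^ 2 + 2 * ((1 - exp (-ρ s)) * deriv (deriv ρ) s)) := by
      refine integral_mono h2 (hb_L2.add (hprod.const_mul 2)) fun s => ?_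
      have hb : b s = (1 - exp (-ρ s)) - deriv (deriv ρ) s := by rw [hode s]; ring
      simp only [hb]
      nlinarith [sq_nonneg (1 - exp (-ρ s))]
    rw [integral_add hb_L2 (hprod.const_mul 2), integral_const_mul] at hmono
    linarith
  linarith [Real.sqrt_le_sqrt hle, Real.sqrt_nonneg (∫ s, |b s|)]
end

section
/- Let f : ℝ → ℝ be twice continuously differentiable with f, f' and f'' square-integrable on ℝ. Then ‖f'‖_{L²}² ≤ ‖f‖_{L²} · ‖f''‖_{L²}. -/
open MeasureTheory Real

/-- Cauchy–Schwarz inequality for real-valued square-integrable functions. -/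
theorem integral_abs_mul_abs_le_sqrt_mul_sqrt {α : Type*} [MeasurableSpace α] {μ : Measure α}
    {u v : α → ℝ} (hu : MemLp u 2 μ) (hv : MemLp v 2 μ) :
    ∫ a, |u a| * |v a| ∂μ ≤ √(∫ a, u a ^ 2 ∂μ) * √(∫ a, v a ^ 2 ∂μ) := by
  have h := integral_mul_norm_le_Lp_mul_Lq (μ := μ) (f := u) (g := v) Real.HolderConjugate.two_two
    (by simpa using hu) (by simpa using hv)
  simpa [Real.sqrt_eq_rpow] using h

/-- Interpolation inequality: for a twice continuously differentiable function `f : ℝ → ℝ`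
with `f`, `f'`, `f''` square-integrable one has `‖f'‖_{L²}² ≤ ‖f‖_{L²} ⬝ ‖f''‖_{L²}`. -/
theorem deriv_L2_sq_le_L2_mul_L2_of_second_deriv
    (f : ℝ → ℝ) (hf : ContDiff ℝ 2 f)
    (hf_L2 : Integrable fun s => (f s) ^ 2)
    (hf'_L2 : Integrable fun s => (deriv f s) ^ 2)
    (hf''_L2 : Integrable fun s => (deriv (deriv f) s) ^ 2) :
    (∫ s : ℝ, (deriv f s) ^ 2) ≤
      Real.sqrt (∫ s : ℝ, (f s) ^ 2) * Real.sqrt (∫ s : ℝ, (deriv (deriv f) s) ^ 2) := by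
  have hf' : ContDiff ℝ 1 (deriv f) := hf.deriv' (n := 1)
  have hf'' : Continuous (deriv (deriv f)) := hf'.continuous_deriv le_rfl
  have m₀ : MemLp f 2 := (memLp_two_iff_integrable_sq hf.continuous.aestronglyMeasurable).2 hf_L2
  have m₁ : MemLp (deriv f) 2 :=
    (memLp_two_iff_integrable_sq hf'.continuous.aestronglyMeasurable).2 hf'_L2
  have m₂ : MemLp (deriv (deriv f)) 2 :=
    (memLp_two_iff_integrable_sq hf''.aestronglyMeasurable).2 hf''_L2
  have parts : ∫ s, f s * deriv (deriv f) s = -∫ s, deriv f s * deriv f s :=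
    integral_mul_deriv_eq_deriv_mul_of_integrable
      (fun s _ => (hf.differentiable two_ne_zero s).hasDerivAt)
      (fun s _ => (hf'.differentiable one_ne_zero s).hasDerivAt)
      (m₀.integrable_mul m₂) (m₁.integrable_mul m₁) (m₀.integrable_mul m₁)
  calc ∫ s, (deriv f s) ^ 2 = -∫ s, f s * deriv (deriv f) s := by simp [parts, sq]
    _ ≤ |∫ s, f s * deriv (deriv f) s| := neg_le_abs _
    _ ≤ ∫ s, |f s * deriv (deriv f) s| := abs_integral_le_integral_abs
    _ = ∫ s, |f s| * |deriv (deriv f) s| := by simp only [abs_mul]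
    _ ≤ _ := integral_abs_mul_abs_le_sqrt_mul_sqrt m₀ m₂
end

section
/- Let f : ℝ → ℝ be continuously differentiable with f and f' square-integrable on ℝ. Then f(s) → 0 as s → +∞ and as s → −∞. -/
open MeasureTheory Real Filter

/-- A continuously differentiable function `f : ℝ → ℝ` with `f` and `f'` square-integrable
tends to `0` at `+∞` and at `-∞`. -/
theorem tendsto_zero_atTop_atBot_of_L2_deriv_L2
    (f : ℝ → ℝ) (hf : ContDiff ℝ 1 f)
    (hf_L2 : Integrable fun s => (f s) ^ 2)
    (hf'_L2 : Integrable fun s => (deriv f s) ^ 2) :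
    Tendsto f atTop (nhds 0) ∧ Tendsto f atBot (nhds 0) := by
  have hcont' : Continuous (deriv f) := hf.continuous_deriv le_rfl
  have hf_mem : MemLp f 2 :=
    (memLp_two_iff_integrable_sq hf.continuous.aestronglyMeasurable).2 hf_L2
  have hf'_mem : MemLp (deriv f) 2 :=
    (memLp_two_iff_integrable_sq hcont'.aestronglyMeasurable).2 hf'_L2
  have hderiv (s : ℝ) : HasDerivAt (fun s => f s ^ 2) (2 * (f s * deriv f s)) s := by
    simpa [mul_assoc] using (hf.differentiable one_ne_zero s).hasDerivAt.fun_pow 2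
  have hint : Integrable fun s => 2 * (f s * deriv f s) :=
    (hf_mem.integrable_mul hf'_mem).const_mul 2
  have of_sq {l : Filter ℝ} (h : Tendsto (fun s => f s ^ 2) l (nhds 0)) :
      Tendsto f l (nhds 0) := by
    rw [tendsto_zero_iff_abs_tendsto_zero]
    simpa [Function.comp_def, Real.sqrt_sq_eq_abs] using h.sqrt
  exact ⟨of_sq (tendsto_zero_of_hasDerivAt_of_integrableOn_Ioi (a := 0)
      (fun s _ => hderiv s) hint.integrableOn hf_L2.integrableOn),
    of_sq (tendsto_zero_of_hasDerivAt_of_integrableOn_Iic (a := 0)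
      (fun s _ => hderiv s) hint.integrableOn hf_L2.integrableOn)⟩
end

section
/- Let ρ : ℝ → ℝ be continuous and let ξ : ℝ → ℝ be twice continuously differentiable with ξ, ξ' and ξ'' square-integrable on ℝ. If ξ''(s) = e^{−ρ(s)}·ξ(s) for all s ∈ ℝ, then ξ is identically zero. In other words, the linearized operator D_ρ : ξ ↦ ξ'' − e^{−ρ}ξ is injective. -/
open MeasureTheory Real

/-- A nonnegative convex function that is integrable on the whole line vanishes identically. -/
theorem ConvexOn.eq_zero_of_nonneg_of_integrable {g : ℝ → ℝ} (hconv : ConvexOn ℝ Set.univ g)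
    (hnonneg : ∀ x, 0 ≤ g x) (hint : Integrable g) (s : ℝ) : g s = 0 := by
  have hmid : ∀ t, g s ≤ (1 / 2) * (g (s + t) + g (s - t)) := fun t => by
    have h := hconv.2 (Set.mem_univ (s + t)) (Set.mem_univ (s - t))
      (by norm_num : (0 : ℝ) ≤ 1 / 2) (by norm_num : (0 : ℝ) ≤ 1 / 2) (by norm_num)
    simp only [smul_eq_mul] at h
    rw [show (1 / 2 : ℝ) * (s + t) + 1 / 2 * (s - t) = s by ring] at h
    linarith
  have hbound : Integrable fun t => (1 / 2) * (g (s + t) + g (s - t)) :=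
    ((hint.comp_add_left s).add (hint.comp_sub_left s)).const_mul _
  have hconst : Integrable fun _ : ℝ => g s :=
    hbound.mono' aestronglyMeasurable_const
      (.of_forall fun t => by rw [Real.norm_of_nonneg (hnonneg s)]; exact hmid t)
  simpa [integrable_const_iff, isFiniteMeasure_iff] using hconst

/-- Injectivity of the linearized operator `D_ρ : ξ ↦ ξ'' - e^{-ρ} ξ`:
if `ξ` is twice continuously differentiable with `ξ`, `ξ'`, `ξ''` square-integrable and
`ξ'' = e^{-ρ} ξ`, then `ξ` vanishes identically. -/
theorem linearized_operator_injective
    (ρ : ℝ → ℝ) (hρ_cont : Continuous ρ)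
    (ξ : ℝ → ℝ) (hξ : ContDiff ℝ 2 ξ)
    (hξ_L2 : Integrable fun s => (ξ s) ^ 2)
    (hξ'_L2 : Integrable fun s => (deriv ξ s) ^ 2)
    (hξ''_L2 : Integrable fun s => (deriv (deriv ξ) s) ^ 2)
    (hker : ∀ s : ℝ, deriv (deriv ξ) s = Real.exp (-ρ s) * ξ s) :
    ∀ s : ℝ, ξ s = 0 := by
  have hd : Differentiable ℝ ξ := hξ.differentiable (by norm_num)
  have hd' : Differentiable ℝ (deriv ξ) :=
    (hξ.iterate_deriv' 1 1).differentiable (by norm_num)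
  have hderiv : deriv (fun s => ξ s ^ 2) = fun s => 2 * ξ s * deriv ξ s := by
    ext s
    simpa using ((hd s).hasDerivAt.fun_pow 2).deriv
  have hconv : ConvexOn ℝ Set.univ fun s => ξ s ^ 2 := by
    refine convexOn_univ_of_deriv2_nonneg (hd.pow 2) ?_ fun s => ?_
    · rw [hderiv]
      exact (hd.const_mul 2).mul hd'
    · have h := (((hd s).hasDerivAt.const_mul 2).mul (hd' s).hasDerivAt).deriv
      rw [Function.iterate_succ_apply, Function.iterate_one, hderiv]
      refine le_of_le_of_eq ?_ h.symm
      rw [hker s]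
      have hpos : 0 ≤ Real.exp (-ρ s) * ξ s ^ 2 := by positivity
      nlinarith [sq_nonneg (deriv ξ s)]
  exact fun s => pow_eq_zero_iff two_ne_zero |>.mp
    (hconv.eq_zero_of_nonneg_of_integrable (fun x => sq_nonneg (ξ x)) hξ_L2 s)
end

section
/- For every continuous square-integrable function η : ℝ → ℝ there exists a twice continuously differentiable function ξ : ℝ → ℝ with ξ, ξ' and ξ'' square-integrable on ℝ such that ξ''(s) − ξ(s) = η(s) for all s ∈ ℝ. In other words, the operator D_0 : ξ ↦ ξ'' − ξ is surjective onto continuous L² functions. -/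
open MeasureTheory Real

open Set Filter

/-- `t ↦ exp t * η t` is dominated by `exp t + exp s * η t ^ 2` on `(-∞, s]`. -/
lemma norm_exp_mul_le_of_le (η : ℝ → ℝ) {s t : ℝ} (hts : t ≤ s) :
    ‖exp t * η t‖ ≤ exp t + exp s * η t ^ 2 := by
  rw [norm_mul, Real.norm_eq_abs, Real.norm_eq_abs, abs_of_pos (exp_pos t)]
  have h1 : |η t| ≤ 1 + η t ^ 2 := by
    rw [← sq_abs]
    nlinarith [sq_nonneg (|η t| - 1), abs_nonneg (η t)]
  have h2 : exp t * η t ^ 2 ≤ exp s * η t ^ 2 := by gcongr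
  nlinarith [mul_le_mul_of_nonneg_left h1 (exp_pos t).le]

lemma integrableOn_Iic_exp_mul {η : ℝ → ℝ} (hη : Continuous η)
    (hη2 : Integrable fun s => η s ^ 2) (s : ℝ) :
    IntegrableOn (fun t => exp t * η t) (Iic s) := by
  refine Integrable.mono' ((integrableOn_exp_Iic s).add (hη2.integrableOn.const_mul (exp s)))
    (by fun_prop) ?_
  filter_upwards [ae_restrict_mem measurableSet_Iic] with t ht
  exact norm_exp_mul_le_of_le η ht

lemma abs_integral_Iic_exp_mul_le {η : ℝ → ℝ}
    (hη2 : Integrable fun s => η s ^ 2) (s : ℝ) :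
    |∫ t in Iic s, exp t * η t| ≤ exp s * (1 + ∫ t, η t ^ 2) := by
  have hint := hη2.integrableOn (s := Iic s) |>.const_mul (exp s)
  calc |∫ t in Iic s, exp t * η t|
      ≤ ∫ t in Iic s, (exp t + exp s * η t ^ 2) := by
        rw [← Real.norm_eq_abs]
        refine norm_integral_le_of_norm_le ((integrableOn_exp_Iic s).add hint) ?_
        filter_upwards [ae_restrict_mem measurableSet_Iic] with t ht
        exact norm_exp_mul_le_of_le η ht
    _ = exp s + exp s * ∫ t in Iic s, η t ^ 2 := by
        rw [integral_add (integrableOn_exp_Iic s) hint, integral_exp_Iic, integral_const_mul]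
    _ ≤ exp s * (1 + ∫ t, η t ^ 2) := by
        have := setIntegral_le_integral (s := Iic s) hη2 (ae_of_all _ fun t => sq_nonneg (η t))
        nlinarith [exp_pos s]

/-- A bounded solution of `u' = η - u` with `η` continuous and square-integrable is itself
square-integrable. -/
lemma integrable_sq_of_hasDerivAt_sub {η u : ℝ → ℝ} (hη : Continuous η)
    (hη2 : Integrable fun s => η s ^ 2) (hu : ∀ s, HasDerivAt u (η s - u s) s) {C : ℝ}
    (hC : ∀ s, |u s| ≤ C) : Integrable fun s => u s ^ 2 := by
  have hcu : Continuous u := continuous_iff_continuousAt.2 fun s => (hu s).continuousAt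
  refine integrable_of_intervalIntegral_norm_bounded (ι := ℕ) (l := atTop)
    (a := fun n => -(n : ℝ)) (b := fun n => (n : ℝ)) (C ^ 2 + ∫ t, η t ^ 2)
    (fun n => (by fun_prop : Continuous fun s => u s ^ 2).integrableOn_Ioc)
    (tendsto_neg_atTop_atBot.comp tendsto_natCast_atTop_atTop)
    tendsto_natCast_atTop_atTop (Eventually.of_forall fun n => ?_)
  have hle : -(n : ℝ) ≤ n := by linarith [n.cast_nonneg (α := ℝ)]
  have hderiv (s : ℝ) : HasDerivAt (fun s => u s ^ 2) (2 * u s * (η s - u s)) s := by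
    simpa using (hu s).fun_pow 2
  have hftc := intervalIntegral.integral_eq_sub_of_hasDerivAt (a := -(n : ℝ)) (b := n)
    (fun s _ => hderiv s)
    ((by fun_prop : Continuous fun s => 2 * u s * (η s - u s)).intervalIntegrable _ _)
  have hmono : ∫ s in (-(n : ℝ))..n, ‖u s ^ 2‖ ≤
      ∫ s in (-(n : ℝ))..n, (η s ^ 2 - 2 * u s * (η s - u s)) := by
    refine intervalIntegral.integral_mono_on hle
      ((by fun_prop : Continuous _).intervalIntegrable _ _)
      ((by fun_prop : Continuous _).intervalIntegrable _ _) fun s _ => ?_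
    rw [Real.norm_eq_abs, abs_of_nonneg (sq_nonneg _)]
    nlinarith [sq_nonneg (u s - η s)]
  rw [intervalIntegral.integral_sub ((by fun_prop : Continuous _).intervalIntegrable _ _)
    ((by fun_prop : Continuous _).intervalIntegrable _ _), hftc,
    intervalIntegral.integral_of_le (f := fun s => η s ^ 2) hle] at hmono
  have hη_le := setIntegral_le_integral (s := Ioc (-(n : ℝ)) n) hη2
    (ae_of_all _ fun t => sq_nonneg (η t))
  have hbd : u (-(n : ℝ)) ^ 2 ≤ C ^ 2 := sq_le_sq' (abs_le.1 (hC _)).1 (abs_le.1 (hC _)).2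
  linarith [sq_nonneg (u n)]

/-- The operator `u ↦ u' + u` is surjective onto continuous square-integrable functions. -/
lemma exists_hasDerivAt_sub_integrable_sq {η : ℝ → ℝ} (hη : Continuous η)
    (hη2 : Integrable fun s => η s ^ 2) :
    ∃ u : ℝ → ℝ, (∀ s, HasDerivAt u (η s - u s) s) ∧ Integrable fun s => u s ^ 2 := by
  set F : ℝ → ℝ := fun s => ∫ t in Iic s, exp t * η t with hF
  have hcont : Continuous fun t => exp t * η t := by fun_prop
  have hFeq : F = fun s => F 0 + ∫ t in (0 : ℝ)..s, exp t * η t := by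
    ext s
    rw [← intervalIntegral.integral_Iic_sub_Iic (integrableOn_Iic_exp_mul hη hη2 0)
      (integrableOn_Iic_exp_mul hη hη2 s)]
    simp [hF]
  have hFderiv (s : ℝ) : HasDerivAt F (exp s * η s) s := by
    rw [hFeq]
    exact (hcont.integral_hasStrictDerivAt 0 s).hasDerivAt.const_add _
  have hu (s : ℝ) : HasDerivAt (fun s => exp (-s) * F s) (η s - exp (-s) * F s) s := by
    refine ((hasDerivAt_neg s).exp.fun_mul (hFderiv s)).congr_deriv ?_
    rw [← mul_assoc (exp (-s)), ← exp_add]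
    simp
    ring
  refine ⟨_, hu, integrable_sq_of_hasDerivAt_sub hη hη2 hu (C := 1 + ∫ t, η t ^ 2) fun s => ?_⟩
  rw [abs_mul, abs_of_pos (exp_pos _)]
  calc exp (-s) * |F s| ≤ exp (-s) * (exp s * (1 + ∫ t, η t ^ 2)) := by
        gcongr
        exact abs_integral_Iic_exp_mul_le hη2 s
    _ = 1 + ∫ t, η t ^ 2 := by rw [← mul_assoc, ← exp_add]; simp

/-- The operator `v ↦ v' - v` is surjective onto continuous square-integrable functions. -/
lemma exists_hasDerivAt_add_integrable_sq {η : ℝ → ℝ} (hη : Continuous η)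
    (hη2 : Integrable fun s => η s ^ 2) :
    ∃ v : ℝ → ℝ, (∀ s, HasDerivAt v (η s + v s) s) ∧ Integrable fun s => v s ^ 2 := by
  obtain ⟨u, hu, hu2⟩ := exists_hasDerivAt_sub_integrable_sq (η := fun s => η (-s))
    (by fun_prop) hη2.comp_neg
  refine ⟨fun s => -u (-s), fun s => ?_, by simpa using hu2.comp_neg⟩
  refine ((hu (-s)).comp s (hasDerivAt_neg s)).neg.congr_deriv ?_
  simp
  ring

/-- Surjectivity of the operator `D_0 : ξ ↦ ξ'' - ξ`: for every continuous
square-integrable `η : ℝ → ℝ` there is a twice continuously differentiable `ξ`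
with `ξ`, `ξ'`, `ξ''` square-integrable such that `ξ'' - ξ = η`. -/
theorem operator_D_zero_surjective
    (η : ℝ → ℝ) (hη_cont : Continuous η)
    (hη_L2 : Integrable fun s => (η s) ^ 2) :
    ∃ ξ : ℝ → ℝ, ContDiff ℝ 2 ξ ∧
      (Integrable fun s => (ξ s) ^ 2) ∧
      (Integrable fun s => (deriv ξ s) ^ 2) ∧
      (Integrable fun s => (deriv (deriv ξ) s) ^ 2) ∧
      ∀ s : ℝ, deriv (deriv ξ) s - ξ s = η s := by
  obtain ⟨v, hv, hv2⟩ := exists_hasDerivAt_add_integrable_sq hη_cont hη_L2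
  have hvc : Continuous v := continuous_iff_continuousAt.2 fun s => (hv s).continuousAt
  obtain ⟨ξ, hξ, hξ2⟩ := exists_hasDerivAt_sub_integrable_sq hvc hv2
  have hξc : Continuous ξ := continuous_iff_continuousAt.2 fun s => (hξ s).continuousAt
  have hd1 : deriv ξ = fun s => v s - ξ s := funext fun s => (hξ s).deriv
  have hdd (s : ℝ) : HasDerivAt (deriv ξ) (η s + ξ s) s := by
    rw [hd1]
    refine ((hv s).fun_sub (hξ s)).congr_deriv ?_
    ring
  have hd2 : deriv (deriv ξ) = fun s => η s + ξ s := funext fun s => (hdd s).deriv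
  have memLp {f : ℝ → ℝ} (hf : Continuous f) (hf2 : Integrable fun s => f s ^ 2) :
      MemLp f 2 := (memLp_two_iff_integrable_sq hf.aestronglyMeasurable).2 hf2
  refine ⟨ξ, ?_, hξ2, ?_, ?_, fun s => by rw [hd2]; ring⟩
  · rw [show (2 : WithTop ℕ∞) = 1 + 1 from one_add_one_eq_two.symm, contDiff_succ_iff_deriv]
    refine ⟨fun s => (hξ s).differentiableAt, by simp, ?_⟩
    rw [contDiff_one_iff_deriv, hd2]
    exact ⟨fun s => (hdd s).differentiableAt, by fun_prop⟩
  · rw [hd1]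
    exact ((memLp hvc hv2).sub (memLp hξc hξ2)).integrable_sq
  · rw [hd2]
    exact ((memLp hη_cont hη_L2).add (memLp hξc hξ2)).integrable_sq
end

section
/- Let ρ : ℝ → ℝ be a continuous function with ρ(s) → 0 as s → ±∞. Then for every continuous square-integrable function η : ℝ → ℝ there exists a unique twice continuously differentiable function ξ : ℝ → ℝ with ξ, ξ' and ξ'' square-integrable on ℝ such that ξ''(s) − e^{−ρ(s)}·ξ(s) = η(s) for all s ∈ ℝ. In other words, the operator D_ρ : ξ ↦ ξ'' − e^{−ρ}ξ is a bijection from W^{2,2}-regular functions onto continuous L² functions. -/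
open MeasureTheory Real Filter

/-- `|f|` is bounded by the sum of the constant `C` and the nonnegative integrable function `g`. -/
structure BoundedByConstAdd (f : ℝ → ℝ) (C : ℝ) (g : ℝ → ℝ) : Prop where
  continuous : Continuous f
  integrable : Integrable g
  nonneg : ∀ t, 0 ≤ g t
  abs_apply_le : ∀ t, |f t| ≤ C + g t

theorem BoundedByConstAdd.comp_neg {f g : ℝ → ℝ} {C : ℝ} (h : BoundedByConstAdd f C g) :
    BoundedByConstAdd (fun t => f (-t)) C (fun t => g (-t)) where
  continuous := h.continuous.comp continuous_neg
  integrable := h.integrable.comp_neg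
  nonneg _ := h.nonneg _
  abs_apply_le _ := h.abs_apply_le _

/-- The causal solution `e^{-ks} ∫_{-∞}^s e^{kt} f(t) dt` of `u' = -k u + f`. -/
noncomputable def causalSolution (k : ℝ) (f : ℝ → ℝ) (s : ℝ) : ℝ :=
  exp (-(k * s)) * ∫ t in Set.Iic s, exp (k * t) * f t

section causalSolution

variable {k C : ℝ} {f g : ℝ → ℝ}

theorem BoundedByConstAdd.abs_exp_mul_le (h : BoundedByConstAdd f C g) (hk : 0 < k) {s t : ℝ}
    (hts : t ≤ s) : |exp (k * t) * f t| ≤ C * exp (k * t) + exp (k * s) * g t := by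
  rw [abs_mul, abs_of_pos (exp_pos _)]
  have h1 : exp (k * t) * |f t| ≤ exp (k * t) * (C + g t) := by
    gcongr
    exact h.abs_apply_le t
  have h2 : exp (k * t) * g t ≤ exp (k * s) * g t := by
    gcongr
    exact h.nonneg t
  linarith

theorem BoundedByConstAdd.integrableOn_majorant (h : BoundedByConstAdd f C g) (hk : 0 < k) (s : ℝ) :
    IntegrableOn (fun t => C * exp (k * t) + exp (k * s) * g t) (Set.Iic s) :=
  ((integrableOn_exp_mul_Iic hk s).const_mul C).add (h.integrable.integrableOn.const_mul _)

theorem BoundedByConstAdd.integrableOn_exp_mul (h : BoundedByConstAdd f C g) (hk : 0 < k) (s : ℝ) :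
    IntegrableOn (fun t => exp (k * t) * f t) (Set.Iic s) := by
  have hc := h.continuous
  refine (h.integrableOn_majorant hk s).mono' (by fun_prop) ?_
  exact (ae_restrict_mem measurableSet_Iic).mono fun t ht => h.abs_exp_mul_le hk ht

theorem BoundedByConstAdd.abs_causalSolution_le (h : BoundedByConstAdd f C g) (hk : 0 < k)
    (s : ℝ) : |causalSolution k f s| ≤ C / k + ∫ t, g t := by
  have h1 : |∫ t in Set.Iic s, exp (k * t) * f t| ≤ exp (k * s) * (C / k + ∫ t, g t) := by
    calc |∫ t in Set.Iic s, exp (k * t) * f t|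
        ≤ ∫ t in Set.Iic s, (C * exp (k * t) + exp (k * s) * g t) := by
          rw [← norm_eq_abs]
          exact norm_integral_le_of_norm_le (h.integrableOn_majorant hk s)
            ((ae_restrict_mem measurableSet_Iic).mono fun t ht => h.abs_exp_mul_le hk ht)
      _ = C * (exp (k * s) / k) + exp (k * s) * ∫ t in Set.Iic s, g t := by
          rw [integral_add ((integrableOn_exp_mul_Iic hk s).const_mul C)
            (h.integrable.integrableOn.const_mul _), integral_const_mul, integral_const_mul,
            integral_exp_mul_Iic hk]
      _ ≤ C * (exp (k * s) / k) + exp (k * s) * ∫ t, g t := by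
          gcongr
          · exact ae_of_all _ h.nonneg
          · exact h.integrable
          · exact Measure.restrict_le_self
      _ = _ := by ring
  rw [causalSolution, abs_mul, abs_of_pos (exp_pos _)]
  calc _ ≤ exp (-(k * s)) * (exp (k * s) * (C / k + ∫ t, g t)) := by gcongr
    _ = _ := by rw [← mul_assoc, ← exp_add]; simp

theorem BoundedByConstAdd.hasDerivAt_causalSolution (h : BoundedByConstAdd f C g) (hk : 0 < k)
    (s : ℝ) : HasDerivAt (causalSolution k f) (-k * causalSolution k f s + f s) s := by
  have hc := h.continuous
  have hc' : Continuous fun t => exp (k * t) * f t := by fun_prop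
  have h1 : HasDerivAt (fun s => ∫ t in Set.Iic s, exp (k * t) * f t) (exp (k * s) * f s) s := by
    have h2 := (hc'.integral_hasStrictDerivAt 0 s).hasDerivAt.add_const
      (∫ t in Set.Iic 0, exp (k * t) * f t)
    refine h2.congr_of_eventuallyEq (Eventually.of_forall fun u => ?_)
    have h3 := intervalIntegral.integral_Iic_sub_Iic (h.integrableOn_exp_mul hk 0)
      (h.integrableOn_exp_mul hk u)
    simp only [← h3, sub_add_cancel]
  have h2 : HasDerivAt (fun s => exp (-(k * s))) (exp (-(k * s)) * -(k * 1)) s :=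
    ((hasDerivAt_id s).const_mul k).neg.exp
  refine (h2.mul h1).congr_deriv ?_
  have h3 : exp (-(k * s)) * exp (k * s) = 1 := by rw [← exp_add]; simp
  rw [causalSolution, ← mul_assoc, h3]
  ring

theorem BoundedByConstAdd.causalSolution_sub {C' : ℝ} {f' g' : ℝ → ℝ}
    (h : BoundedByConstAdd f C g) (h' : BoundedByConstAdd f' C' g') (hk : 0 < k) (s : ℝ) :
    causalSolution k (fun t => f t - f' t) s = causalSolution k f s - causalSolution k f' s := by
  simp only [causalSolution, mul_sub]
  rw [integral_sub (h.integrableOn_exp_mul hk s) (h'.integrableOn_exp_mul hk s), mul_sub]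

end causalSolution

/-- The Green operator of `u ↦ u'' - k² u`: convolution with `-e^{-k|s|} / (2k)`. -/
noncomputable def greenOperator (k : ℝ) (f : ℝ → ℝ) (s : ℝ) : ℝ :=
  -(causalSolution k f s + causalSolution k (fun t => f (-t)) (-s)) / (2 * k)

/-- The derivative of `greenOperator k f`. -/
noncomputable def greenOperatorDeriv (k : ℝ) (f : ℝ → ℝ) (s : ℝ) : ℝ :=
  (causalSolution k f s - causalSolution k (fun t => f (-t)) (-s)) / 2

section greenOperator

variable {k C : ℝ} {f g : ℝ → ℝ}

theorem BoundedByConstAdd.hasDerivAt_anticausal (h : BoundedByConstAdd f C g) (hk : 0 < k)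
    (s : ℝ) : HasDerivAt (fun s => causalSolution k (fun t => f (-t)) (-s))
      (k * causalSolution k (fun t => f (-t)) (-s) - f s) s := by
  refine ((h.comp_neg.hasDerivAt_causalSolution hk (-s)).comp s (hasDerivAt_neg s)).congr_deriv ?_
  rw [neg_neg]
  ring

theorem BoundedByConstAdd.abs_anticausal_le (h : BoundedByConstAdd f C g) (hk : 0 < k)
    (s : ℝ) : |causalSolution k (fun t => f (-t)) (-s)| ≤ C / k + ∫ t, g t := by
  simpa only [integral_neg_eq_self] using h.comp_neg.abs_causalSolution_le hk (-s)

theorem BoundedByConstAdd.hasDerivAt_greenOperator (h : BoundedByConstAdd f C g) (hk : 0 < k)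
    (s : ℝ) : HasDerivAt (greenOperator k f) (greenOperatorDeriv k f s) s := by
  refine (((h.hasDerivAt_causalSolution hk s).add
    (h.hasDerivAt_anticausal hk s)).neg.div_const (2 * k)).congr_deriv ?_
  rw [greenOperatorDeriv]
  field_simp
  ring

theorem BoundedByConstAdd.hasDerivAt_greenOperatorDeriv (h : BoundedByConstAdd f C g)
    (hk : 0 < k) (s : ℝ) :
    HasDerivAt (greenOperatorDeriv k f) (k ^ 2 * greenOperator k f s + f s) s := by
  refine (((h.hasDerivAt_causalSolution hk s).sub
    (h.hasDerivAt_anticausal hk s)).div_const 2).congr_deriv ?_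
  rw [greenOperator]
  field_simp
  ring

theorem BoundedByConstAdd.abs_greenOperator_le (h : BoundedByConstAdd f C g) (hk : 0 < k)
    (s : ℝ) : |greenOperator k f s| ≤ (C / k + ∫ t, g t) / k := by
  have h1 := abs_le.1 (h.abs_causalSolution_le hk s)
  have h2 := abs_le.1 (h.abs_anticausal_le hk s)
  rw [greenOperator, abs_div, abs_neg, abs_of_pos (by positivity : 0 < 2 * k),
    div_le_div_iff₀ (by positivity) hk]
  have h3 : |causalSolution k f s + causalSolution k (fun t => f (-t)) (-s)|
      ≤ 2 * (C / k + ∫ t, g t) := abs_le.2 ⟨by linarith, by linarith⟩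
  nlinarith

theorem BoundedByConstAdd.abs_greenOperatorDeriv_le (h : BoundedByConstAdd f C g) (hk : 0 < k)
    (s : ℝ) : |greenOperatorDeriv k f s| ≤ C / k + ∫ t, g t := by
  have h1 := abs_le.1 (h.abs_causalSolution_le hk s)
  have h2 := abs_le.1 (h.abs_anticausal_le hk s)
  rw [greenOperatorDeriv]
  exact abs_le.2 ⟨by linarith, by linarith⟩

theorem BoundedByConstAdd.greenOperator_sub {C' : ℝ} {f' g' : ℝ → ℝ}
    (h : BoundedByConstAdd f C g) (h' : BoundedByConstAdd f' C' g') (hk : 0 < k) (s : ℝ) :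
    greenOperator k (fun t => f t - f' t) s = greenOperator k f s - greenOperator k f' s := by
  simp only [greenOperator]
  rw [h.causalSolution_sub h' hk, h.comp_neg.causalSolution_sub h'.comp_neg hk]
  ring

end greenOperator

/-- If `q` is continuous with `0 < m ≤ q ≤ k²`, then `ξ'' - q ξ = η` has a solution bounded
together with its derivative. -/
theorem exists_bounded_solution {q η : ℝ → ℝ} {m k : ℝ} (hq : Continuous q) (hm : 0 < m)
    (hk : 0 < k) (hmq : ∀ s, m ≤ q s) (hqk : ∀ s, q s ≤ k ^ 2) (hη : Continuous η)
    (hη_L2 : Integrable fun s => η s ^ 2) :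
    ∃ ξ ξ' : ℝ → ℝ, (∀ s, HasDerivAt ξ (ξ' s) s) ∧
      (∀ s, HasDerivAt ξ' (q s * ξ s + η s) s) ∧ ∃ B, ∀ s, |ξ s| ≤ B ∧ |ξ' s| ≤ B := by
  have hmk : m ≤ k ^ 2 := (hmq 0).trans (hqk 0)
  have habs : ∀ (u : ℝ) (s : ℝ), |(q s - k ^ 2) * u| ≤ (k ^ 2 - m) * |u| := fun u s => by
    rw [abs_mul]
    gcongr
    exact abs_le.2 ⟨by linarith [hmq s], by linarith [hqk s]⟩
  have hb : ∀ u : BoundedContinuousFunction ℝ ℝ,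
      BoundedByConstAdd (fun t => η t + (q t - k ^ 2) * u t) (1 + (k ^ 2 - m) * ‖u‖)
        (fun t => η t ^ 2) := fun u =>
    { continuous := by fun_prop
      integrable := hη_L2
      nonneg := fun t => sq_nonneg _
      abs_apply_le := fun t => by
        have h1 : |η t| ≤ 1 + η t ^ 2 := by
          rw [← sq_abs]
          nlinarith [sq_nonneg (|η t| - 1), abs_nonneg (η t)]
        have h2 : (k ^ 2 - m) * |u t| ≤ (k ^ 2 - m) * ‖u‖ :=
          mul_le_mul_of_nonneg_left (u.norm_coe_le_norm t) (by linarith)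
        linarith [abs_add_le (η t) ((q t - k ^ 2) * u t), habs (u t) t] }
  let T : BoundedContinuousFunction ℝ ℝ → BoundedContinuousFunction ℝ ℝ := fun u =>
    BoundedContinuousFunction.ofNormedAddCommGroup
      (greenOperator k fun t => η t + (q t - k ^ 2) * u t)
      (continuous_iff_continuousAt.2 fun s => ((hb u).hasDerivAt_greenOperator hk s).continuousAt)
      _ ((hb u).abs_greenOperator_le hk)
  let K : NNReal := ⟨(k ^ 2 - m) / k ^ 2, div_nonneg (by linarith) (by positivity)⟩
  have hT : ContractingWith K T := by
    refine ⟨?_, LipschitzWith.of_dist_le_mul fun u v => ?_⟩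
    · rw [← NNReal.coe_lt_coe]
      change (k ^ 2 - m) / k ^ 2 < 1
      rw [div_lt_one (by positivity)]
      linarith
    · refine (BoundedContinuousFunction.dist_le (by positivity)).2 fun s => ?_
      have hd : BoundedByConstAdd
          (fun t => (η t + (q t - k ^ 2) * u t) - (η t + (q t - k ^ 2) * v t))
          ((k ^ 2 - m) * dist u v) (fun _ => 0) :=
        { continuous := by fun_prop
          integrable := integrable_zero _ _ _
          nonneg := fun _ => le_rfl
          abs_apply_le := fun t => by
            have h1 : |u t - v t| ≤ dist u v := by
              rw [← Real.dist_eq]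
              exact BoundedContinuousFunction.dist_coe_le_dist t
            have h2 := mul_le_mul_of_nonneg_left h1 (by linarith : 0 ≤ k ^ 2 - m)
            have h3 := habs (u t - v t) t
            rw [add_zero, show (η t + (q t - k ^ 2) * u t) - (η t + (q t - k ^ 2) * v t)
              = (q t - k ^ 2) * (u t - v t) by ring]
            exact h3.trans h2 }
      have h1 := hd.abs_greenOperator_le hk s
      rw [(hb u).greenOperator_sub (hb v) hk s] at h1
      change |_ - _| ≤ (k ^ 2 - m) / k ^ 2 * dist u v
      refine h1.trans_eq ?_
      rw [integral_zero, add_zero]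
      field_simp
  have hfix := hT.fixedPoint_isFixedPt
  set ξ := hT.fixedPoint T
  have hξ : ∀ s, greenOperator k (fun t => η t + (q t - k ^ 2) * ξ t) s = ξ s := fun s =>
    DFunLike.congr_fun hfix s
  refine ⟨ξ, greenOperatorDeriv k fun t => η t + (q t - k ^ 2) * ξ t, fun s => ?_, fun s => ?_,
    _, fun s => ⟨(ξ.norm_coe_le_norm s).trans (le_max_left _ _),
      ((hb ξ).abs_greenOperatorDeriv_le hk s).trans (le_max_right _ _)⟩⟩
  · exact ((hb ξ).hasDerivAt_greenOperator hk s).congr_of_eventuallyEq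
      (Eventually.of_forall fun t => (hξ t).symm)
  · refine ((hb ξ).hasDerivAt_greenOperatorDeriv hk s).congr_deriv ?_
    rw [hξ]
    ring

/-- A bounded solution of `ξ'' - q ξ = η` with bounded derivative and `0 < m ≤ q` is
square-integrable together with its derivative if `η` is. -/
theorem integrable_sq_of_bounded_solution {q η ξ ξ' : ℝ → ℝ} {m B : ℝ} (hq : Continuous q)
    (hm : 0 < m) (hmq : ∀ s, m ≤ q s) (hη : Continuous η) (hη_L2 : Integrable fun s => η s ^ 2)
    (hξ : ∀ s, HasDerivAt ξ (ξ' s) s) (hξ' : ∀ s, HasDerivAt ξ' (q s * ξ s + η s) s)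
    (hB : ∀ s, |ξ s| ≤ B ∧ |ξ' s| ≤ B) :
    (Integrable fun s => ξ s ^ 2) ∧ Integrable fun s => ξ' s ^ 2 := by
  have hcξ : Continuous ξ := continuous_iff_continuousAt.2 fun s => (hξ s).continuousAt
  have hcξ' : Continuous ξ' := continuous_iff_continuousAt.2 fun s => (hξ' s).continuousAt
  let e : ℝ → ℝ := fun s => m * ξ s ^ 2 + 2 * ξ' s ^ 2
  have hce : Continuous e := by fun_prop
  have he : ∀ s, 0 ≤ e s := fun s => by positivity
  have hderiv : ∀ s, HasDerivAt (fun s => 2 * (ξ s * ξ' s))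
      (2 * (ξ' s * ξ' s + ξ s * (q s * ξ s + η s))) s := fun s =>
    ((hξ s).mul (hξ' s)).const_mul 2
  have hle : ∀ s, e s ≤ 2 * (ξ' s * ξ' s + ξ s * (q s * ξ s + η s)) + m⁻¹ * η s ^ 2 := fun s => by
    have h1 : 0 ≤ m⁻¹ * (m * ξ s + η s) ^ 2 := by positivity
    have h2 : m⁻¹ * (m * ξ s + η s) ^ 2
        = m * ξ s ^ 2 + 2 * ξ s * η s + m⁻¹ * η s ^ 2 := by
      field_simp
      ring
    have h3 : m * ξ s ^ 2 ≤ q s * ξ s ^ 2 := by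
      gcongr
      exact hmq s
    simp only [e]
    nlinarith
  have hprod : ∀ s, |ξ s * ξ' s| ≤ B * B := fun s => by
    rw [abs_mul]
    exact mul_le_mul (hB s).1 (hB s).2 (abs_nonneg _) ((abs_nonneg _).trans (hB s).1)
  have hint : Integrable e := by
    refine integrable_of_intervalIntegral_norm_bounded (l := atTop) (a := fun n : ℕ => -(n : ℝ))
      (b := fun n : ℕ => (n : ℝ)) (4 * (B * B) + m⁻¹ * ∫ s, η s ^ 2)
      (fun n => hce.integrableOn_Ioc) (tendsto_neg_atTop_atBot.comp tendsto_natCast_atTop_atTop)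
      tendsto_natCast_atTop_atTop (Eventually.of_forall fun n => ?_)
    have hn : -(n : ℝ) ≤ n := by linarith [n.cast_nonneg (α := ℝ)]
    have hc1 : Continuous fun s => 2 * (ξ' s * ξ' s + ξ s * (q s * ξ s + η s)) := by fun_prop
    have hc2 : Continuous fun s => m⁻¹ * η s ^ 2 := by fun_prop
    calc ∫ s in (-(n : ℝ))..n, ‖e s‖ = ∫ s in (-(n : ℝ))..n, e s := by
          simp only [norm_of_nonneg (he _)]
      _ ≤ ∫ s in (-(n : ℝ))..n,
            (2 * (ξ' s * ξ' s + ξ s * (q s * ξ s + η s)) + m⁻¹ * η s ^ 2) :=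
          intervalIntegral.integral_mono_on hn (hce.intervalIntegrable _ _)
            ((hc1.add hc2).intervalIntegrable _ _) fun s _ => hle s
      _ = (2 * (ξ n * ξ' n) - 2 * (ξ (-n) * ξ' (-n)))
            + m⁻¹ * ∫ s in (-(n : ℝ))..n, η s ^ 2 := by
          rw [intervalIntegral.integral_add (hc1.intervalIntegrable _ _)
            (hc2.intervalIntegrable _ _), intervalIntegral.integral_const_mul m⁻¹,
            intervalIntegral.integral_eq_sub_of_hasDerivAt (fun s _ => hderiv s)
              (hc1.intervalIntegrable _ _)]
      _ ≤ 4 * (B * B) + m⁻¹ * ∫ s, η s ^ 2 := by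
          have h1 := abs_le.1 (hprod n)
          have h2 := abs_le.1 (hprod (-n))
          have h3 : ∫ s in (-(n : ℝ))..n, η s ^ 2 ≤ ∫ s, η s ^ 2 := by
            rw [intervalIntegral.integral_of_le hn]
            exact setIntegral_le_integral hη_L2 (ae_of_all _ fun s => sq_nonneg _)
          have h4 := mul_le_mul_of_nonneg_left h3 (inv_nonneg.2 hm.le)
          linarith
  constructor
  · refine (hint.const_mul m⁻¹).mono' (by fun_prop) (ae_of_all _ fun s => ?_)
    rw [norm_of_nonneg (sq_nonneg _), le_inv_mul_iff₀ hm]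
    have : 0 ≤ ξ' s ^ 2 := sq_nonneg _
    simp only [e]
    linarith
  · refine hint.mono' (by fun_prop) (ae_of_all _ fun s => ?_)
    rw [norm_of_nonneg (sq_nonneg _)]
    have : 0 ≤ m * ξ s ^ 2 := by positivity
    have : 0 ≤ ξ' s ^ 2 := sq_nonneg _
    simp only [e]
    linarith

/-- The only solution of `w'' = q w` with `w`, `w'` square-integrable and `q` positive and bounded
is `w = 0`. -/
theorem eq_zero_of_integrable_sq_solution {q w w' : ℝ → ℝ} {M : ℝ} (hq : Continuous q)
    (hq_pos : ∀ s, 0 < q s) (hqM : ∀ s, q s ≤ M) (hw : ∀ s, HasDerivAt w (w' s) s)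
    (hw' : ∀ s, HasDerivAt w' (q s * w s) s) (hw_L2 : Integrable fun s => w s ^ 2)
    (hw'_L2 : Integrable fun s => w' s ^ 2) (s : ℝ) : w s = 0 := by
  have hcw : Continuous w := continuous_iff_continuousAt.2 fun s => (hw s).continuousAt
  have hcw' : Continuous w' := continuous_iff_continuousAt.2 fun s => (hw' s).continuousAt
  have hce : Continuous fun s => w' s * w' s + w s * (q s * w s) := by fun_prop
  have hnn : ∀ s, 0 ≤ w s * (q s * w s) := fun s => by
    nlinarith [mul_nonneg (hq_pos s).le (sq_nonneg (w s))]
  have hnn' : ∀ s, 0 ≤ w' s * w' s + w s * (q s * w s) := fun s =>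
    add_nonneg (mul_self_nonneg _) (hnn s)
  have hprod : Integrable fun s => w s * w' s := by
    refine (hw_L2.add hw'_L2).mono' (by fun_prop) (ae_of_all _ fun s => ?_)
    simp only [Pi.add_apply]
    exact abs_le.2 ⟨by nlinarith [sq_nonneg (w s + w' s), sq_nonneg (w s), sq_nonneg (w' s)],
      by nlinarith [sq_nonneg (w s - w' s), sq_nonneg (w s), sq_nonneg (w' s)]⟩
  have henergy : Integrable fun s => w' s * w' s + w s * (q s * w s) := by
    refine (hw'_L2.add (hw_L2.const_mul M)).mono' (by fun_prop) (ae_of_all _ fun s => ?_)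
    rw [norm_of_nonneg (hnn' s)]
    simp only [Pi.add_apply]
    nlinarith [mul_le_mul_of_nonneg_right (hqM s) (sq_nonneg (w s))]
  have hzero := integral_eq_zero_of_hasDerivAt_of_integrable (fun s => (hw s).mul (hw' s))
    henergy hprod
  have hae := (integral_eq_zero_iff_of_nonneg hnn' henergy).1 hzero
  have heq := congrFun ((hce.ae_eq_iff_eq volume continuous_zero).1 hae) s
  simp only [Pi.zero_apply] at heq
  have h0 : q s * w s ^ 2 = 0 := by nlinarith [hnn s, mul_self_nonneg (w' s)]
  simpa [(hq_pos s).ne'] using h0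

theorem ContDiff.hasDerivAt_deriv_deriv {ξ : ℝ → ℝ} (h : ContDiff ℝ 2 ξ) :
    (∀ s, HasDerivAt ξ (deriv ξ s) s) ∧ ∀ s, HasDerivAt (deriv ξ) (deriv (deriv ξ) s) s := by
  have h1 : ContDiff ℝ 1 (deriv ξ) := (contDiff_succ_iff_deriv (n := 1).1 h).2.2
  exact ⟨fun s => (h.differentiable (by norm_num) s).hasDerivAt,
    fun s => (h1.differentiable (by norm_num) s).hasDerivAt⟩

theorem exists_forall_abs_le_of_tendsto_zero {ρ : ℝ → ℝ} (hρ : Continuous ρ)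
    (htop : Tendsto ρ atTop (nhds 0)) (hbot : Tendsto ρ atBot (nhds 0)) :
    ∃ C, ∀ s, |ρ s| ≤ C := by
  let f : ZeroAtInftyContinuousMap ℝ ℝ :=
    ⟨⟨ρ, hρ⟩, by rw [cocompact_eq_atBot_atTop]; exact hbot.sup htop⟩
  exact ⟨‖f.toBCF‖, fun s => f.toBCF.norm_coe_le_norm s⟩

theorem integrable_sq_sub {u v : ℝ → ℝ} (hu : Continuous u) (hv : Continuous v)
    (hu_L2 : Integrable fun s => u s ^ 2) (hv_L2 : Integrable fun s => v s ^ 2) :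
    Integrable fun s => (u s - v s) ^ 2 := by
  refine ((hu_L2.add hv_L2).const_mul 2).mono' (by fun_prop) (ae_of_all _ fun s => ?_)
  rw [norm_of_nonneg (sq_nonneg _)]
  simp only [Pi.add_apply]
  nlinarith [sq_nonneg (u s + v s)]

/-- Bijectivity of the linearized operator `D_ρ : ξ ↦ ξ'' - e^{-ρ} ξ` for a continuous
`ρ` decaying to `0` at both infinities: for every continuous square-integrable `η` there
is a unique twice continuously differentiable `ξ` with `ξ`, `ξ'`, `ξ''` square-integrable
such that `ξ'' - e^{-ρ} ξ = η`. -/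
theorem linearized_operator_bijective
    (ρ : ℝ → ℝ) (hρ_cont : Continuous ρ)
    (hρ_top : Tendsto ρ atTop (nhds 0)) (hρ_bot : Tendsto ρ atBot (nhds 0))
    (η : ℝ → ℝ) (hη_cont : Continuous η)
    (hη_L2 : Integrable fun s => (η s) ^ 2) :
    ∃! ξ : ℝ → ℝ, ContDiff ℝ 2 ξ ∧
      (Integrable fun s => (ξ s) ^ 2) ∧
      (Integrable fun s => (deriv ξ s) ^ 2) ∧
      (Integrable fun s => (deriv (deriv ξ) s) ^ 2) ∧
      ∀ s : ℝ, deriv (deriv ξ) s - Real.exp (-ρ s) * ξ s = η s := by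
  obtain ⟨C, hC⟩ := exists_forall_abs_le_of_tendsto_zero hρ_cont hρ_top hρ_bot
  have hq : Continuous fun s => exp (-ρ s) := by fun_prop
  have hlow : ∀ s, exp (-C) ≤ exp (-ρ s) := fun s =>
    exp_le_exp.2 (by linarith [(abs_le.1 (hC s)).2])
  have hup : ∀ s, exp (-ρ s) ≤ exp (C / 2) ^ 2 := fun s => by
    rw [← exp_nat_mul]
    exact exp_le_exp.2 (by push_cast; linarith [(abs_le.1 (hC s)).1])
  obtain ⟨ξ, ξ', hξ, hξ', B, hB⟩ := exists_bounded_solution hq (exp_pos (-C)) (exp_pos (C / 2))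
    hlow hup hη_cont hη_L2
  obtain ⟨hL, hL'⟩ := integrable_sq_of_bounded_solution hq (exp_pos (-C)) hlow hη_cont hη_L2
    hξ hξ' hB
  have hcξ : Continuous ξ := continuous_iff_continuousAt.2 fun s => (hξ s).continuousAt
  have hd : deriv ξ = ξ' := funext fun s => (hξ s).deriv
  have hd' : deriv ξ' = fun s => exp (-ρ s) * ξ s + η s := funext fun s => (hξ' s).deriv
  refine ⟨ξ, ⟨?_, hL, hd ▸ hL', ?_, fun s => ?_⟩, ?_⟩
  · refine (contDiff_succ_iff_deriv (n := 1)).2 ⟨fun s => (hξ s).differentiableAt, by simp, ?_⟩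
    rw [hd, contDiff_one_iff_deriv, hd']
    exact ⟨fun s => (hξ' s).differentiableAt, by fun_prop⟩
  · rw [hd, hd']
    refine ((hL.const_mul (2 * (exp (C / 2) ^ 2) ^ 2)).add (hη_L2.const_mul 2)).mono'
      (by fun_prop) (ae_of_all _ fun s => ?_)
    rw [norm_of_nonneg (sq_nonneg _)]
    simp only [Pi.add_apply]
    have h1 : (exp (-ρ s)) ^ 2 * ξ s ^ 2 ≤ (exp (C / 2) ^ 2) ^ 2 * ξ s ^ 2 := by
      gcongr
      exact hup s
    nlinarith [sq_nonneg (exp (-ρ s) * ξ s - η s)]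
  · rw [hd, hd']
    ring
  · rintro ζ ⟨hζ, hζL, hζL', -, hζeq⟩
    obtain ⟨hζd, hζd'⟩ := hζ.hasDerivAt_deriv_deriv
    have hcξ' : Continuous ξ' := continuous_iff_continuousAt.2 fun s => (hξ' s).continuousAt
    have hcζ : Continuous ζ := continuous_iff_continuousAt.2 fun s => (hζd s).continuousAt
    have hcζ' : Continuous (deriv ζ) :=
      continuous_iff_continuousAt.2 fun s => (hζd' s).continuousAt
    funext s
    refine sub_eq_zero.1 (eq_zero_of_integrable_sq_solution (w := fun s => ζ s - ξ s)
      (w' := fun s => deriv ζ s - ξ' s) hq (fun s => exp_pos _) hup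
      (fun s => (hζd s).sub (hξ s)) (fun s => ?_) ?_ ?_ s)
    · refine ((hζd' s).sub (hξ' s)).congr_deriv ?_
      linarith [hζeq s]
    · exact integrable_sq_sub hcζ hcξ hζL hL
    · exact integrable_sq_sub hcζ' hcξ' hζL' hL'
end

section
/- Let b : ℝ → ℝ be any function and let ρ₁, ρ₂ : ℝ → ℝ be twice continuously differentiable functions with ρ₁(s) → 0 and ρ₂(s) → 0 as s → ±∞, both satisfying the Kazdan–Warner equation ρ''(s) = 1 − e^{−ρ(s)} − b(s) for all s ∈ ℝ. Then ρ₁ = ρ₂. -/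
open Filter

/-- A local maximum of a continuous real function has nonpositive second derivative. -/
lemma IsLocalMax.deriv_deriv_nonpos {w : ℝ → ℝ} {x : ℝ} (h : IsLocalMax w x)
    (hc : ContinuousAt w x) : deriv (deriv w) x ≤ 0 := by
  by_contra! hpos
  have hmin : IsLocalMin w x := isLocalMin_of_deriv_deriv_pos hpos h.deriv_eq_zero hc
  have hconst : w =ᶠ[nhds x] fun _ => w x := by
    filter_upwards [h, hmin] with y h₁ h₂ using le_antisymm h₁ h₂
  have hzero : deriv (deriv w) x = 0 := by
    rw [hconst.deriv.deriv_eq]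
    simp
  exact hpos.ne' hzero

/-- Maximum principle on the line: a continuous function vanishing at both infinities and
strictly convex wherever it is positive is nonpositive. -/
lemma nonpos_of_deriv_deriv_pos_of_pos {w : ℝ → ℝ} (hc : Continuous w)
    (htop : Tendsto w atTop (nhds 0)) (hbot : Tendsto w atBot (nhds 0))
    (hw : ∀ s, 0 < w s → 0 < deriv (deriv w) s) (s : ℝ) : w s ≤ 0 := by
  by_contra! hs
  have hlim : Tendsto w (cocompact ℝ) (nhds 0) := by
    rw [cocompact_eq_atBot_atTop]
    exact hbot.sup htop
  obtain ⟨x, hx⟩ := hc.exists_forall_ge' s (hlim.eventually (eventually_le_nhds hs))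
  have hmax : IsLocalMax w x := Eventually.of_forall hx
  exact (hw x (hs.trans_le (hx s))).not_ge (hmax.deriv_deriv_nonpos hc.continuousAt)

/-- Comparison of two decaying solutions of the Kazdan–Warner equation. -/
lemma kazdan_warner_le {b ρ₁ ρ₂ : ℝ → ℝ}
    (hρ₁ : ContDiff ℝ 2 ρ₁) (hρ₂ : ContDiff ℝ 2 ρ₂)
    (hρ₁_top : Tendsto ρ₁ atTop (nhds 0)) (hρ₁_bot : Tendsto ρ₁ atBot (nhds 0))
    (hρ₂_top : Tendsto ρ₂ atTop (nhds 0)) (hρ₂_bot : Tendsto ρ₂ atBot (nhds 0))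
    (hode₁ : ∀ s : ℝ, deriv (deriv ρ₁) s = 1 - Real.exp (-ρ₁ s) - b s)
    (hode₂ : ∀ s : ℝ, deriv (deriv ρ₂) s = 1 - Real.exp (-ρ₂ s) - b s) :
    ρ₁ ≤ ρ₂ := by
  intro s
  have hderiv : deriv (ρ₁ - ρ₂) = deriv ρ₁ - deriv ρ₂ := funext fun t =>
    deriv_sub (hρ₁.differentiable (by norm_num) t) (hρ₂.differentiable (by norm_num) t)
  refine sub_nonpos.mp (nonpos_of_deriv_deriv_pos_of_pos (w := ρ₁ - ρ₂)
    (hρ₁.continuous.sub hρ₂.continuous) (sub_zero (0 : ℝ) ▸ hρ₁_top.sub hρ₂_top)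
    (sub_zero (0 : ℝ) ▸ hρ₁_bot.sub hρ₂_bot) (fun t ht => ?_) s)
  rw [hderiv, deriv_sub (hρ₁.differentiable_deriv_two t) (hρ₂.differentiable_deriv_two t),
    hode₁, hode₂]
  have hexp : Real.exp (-ρ₁ t) < Real.exp (-ρ₂ t) :=
    Real.exp_lt_exp.mpr (neg_lt_neg (sub_pos.mp ht))
  linarith

/-- Uniqueness for the Kazdan–Warner equation: two twice continuously differentiable
solutions of `ρ'' = 1 - e^{-ρ} - b` decaying to `0` at both infinities coincide. -/
theorem kazdan_warner_uniqueness
    (b : ℝ → ℝ) (ρ₁ ρ₂ : ℝ → ℝ)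
    (hρ₁ : ContDiff ℝ 2 ρ₁) (hρ₂ : ContDiff ℝ 2 ρ₂)
    (hρ₁_top : Tendsto ρ₁ atTop (nhds 0)) (hρ₁_bot : Tendsto ρ₁ atBot (nhds 0))
    (hρ₂_top : Tendsto ρ₂ atTop (nhds 0)) (hρ₂_bot : Tendsto ρ₂ atBot (nhds 0))
    (hode₁ : ∀ s : ℝ, deriv (deriv ρ₁) s = 1 - Real.exp (-ρ₁ s) - b s)
    (hode₂ : ∀ s : ℝ, deriv (deriv ρ₂) s = 1 - Real.exp (-ρ₂ s) - b s) :
    ρ₁ = ρ₂ := by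
  exact le_antisymm
    (kazdan_warner_le hρ₁ hρ₂ hρ₁_top hρ₁_bot hρ₂_top hρ₂_bot hode₁ hode₂)
    (kazdan_warner_le hρ₂ hρ₁ hρ₂_top hρ₂_bot hρ₁_top hρ₁_bot hode₂ hode₁)
end
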